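/- arXiv:2405.10179 — 2 statements merged into one kernel-verified Lean document; each statement's English description precedes it below -/
import Mathlib

section
/- In the nonlinear setting with standing conditions (N1)–(N5): for every δ > 0 and every ε > 0 there exists n_0 ∈ ℕ such that for every n ≥ n_0 and every closed interval Δ ⊂ [0,1] with |Δ| ≥ δ, one has m_n(Δ)/|Δ|^{h_n} ≤ 1 + ε. -/
open Set Filter MeasureTheory Topology

noncomputable section

/-- Composition `g_{i₁} ∘ g_{i₂} ∘ ⋯ ∘ g_{i_l}` along a finite word. -/
def wordComp (g : ℕ → ℝ → ℝ) : List ℕ → ℝ → ℝ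
  | [] => id
  | k :: w => g k ∘ wordComp g w

/-- The limit set `J_n` of the IFS `S_n = {g_1, …, g_n}`. -/
def limitSet (g : ℕ → ℝ → ℝ) (n : ℕ) : Set ℝ :=
  ⋂ l : ℕ, ⋃ w ∈ {w : List ℕ | w.length = l + 1 ∧ ∀ i ∈ w, 1 ≤ i ∧ i ≤ n},
    wordComp g w '' Set.Icc (0 : ℝ) 1

/-- The distortion `κ(g) = sup_{x,y ∈ [0,1]} |g′(y)|/|g′(x)|` of a map with derivative `f'`. -/
def distortion (f' : ℝ → ℝ) : ℝ :=
  ⨆ x ∈ Set.Icc (0 : ℝ) 1, ⨆ y ∈ Set.Icc (0 : ℝ) 1, |f' y| / |f' x|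

/-- The nonlinear setting of the paper: a strictly decreasing sequence `b_k → 0` with `b_0 = 1`,
    decreasing `C²` diffeomorphisms `g_k : [0,1] → [b_k, b_{k-1}]` (with first and second
    derivatives `g'` and `g''`), the Hausdorff dimensions `h_n` of the limit sets `J_n`, and
    the standing conditions (N1)–(N5). -/
structure NonlinearIFS where
  b : ℕ → ℝ
  g : ℕ → ℝ → ℝ
  g' : ℕ → ℝ → ℝ
  g'' : ℕ → ℝ → ℝ
  h : ℕ → ℝ
  b_zero : b 0 = 1
  b_anti : StrictAnti b
  b_lim : Filter.Tendsto b Filter.atTop (nhds 0)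
  g_image : ∀ k, 1 ≤ k → g k '' Set.Icc (0 : ℝ) 1 = Set.Icc (b k) (b (k - 1))
  g_anti : ∀ k, 1 ≤ k → StrictAntiOn (g k) (Set.Icc (0 : ℝ) 1)
  g_zero : ∀ k, 1 ≤ k → g k 0 = b (k - 1)
  g_one : ∀ k, 1 ≤ k → g k 1 = b k
  deriv1 : ∀ k, 1 ≤ k → ∀ x ∈ Set.Icc (0 : ℝ) 1, HasDerivAt (g k) (g' k x) x
  deriv2 : ∀ k, 1 ≤ k → ∀ x ∈ Set.Icc (0 : ℝ) 1, HasDerivAt (g' k) (g'' k x) x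
  deriv_ne : ∀ k, 1 ≤ k → ∀ x ∈ Set.Icc (0 : ℝ) 1, g' k x ≠ 0
  h_dim : ∀ n, 1 ≤ n → dimH (limitSet g n) = ENNReal.ofReal (h n)
  N1 : Filter.Tendsto (fun n : ℕ => (1 - h n) * Real.log n) Filter.atTop (nhds 0)
  N2 : Filter.Tendsto (fun n : ℕ => ⨆ k ∈ Set.Ici n, b k / b (k + 1)) Filter.atTop (nhds 1)
  N3 : ∃ c : ℝ, 0 < c ∧ ∀ n, 1 ≤ n → ∀ x ∈ Set.Icc (0 : ℝ) 1, |g'' n x / g' n x| < c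
  N4 : Filter.Tendsto (fun n : ℕ => distortion (g' n)) Filter.atTop (nhds 1)
  N5 : ∃ α : ℝ, α < 1 ∧ ∀ n, 1 ≤ n → ∀ x ∈ Set.Icc (0 : ℝ) 1, |g' n x| < α

/-- The normalized Hausdorff measure `m_n(A) = H_{h_n}(A ∩ J_n)/H_{h_n}(J_n)`. -/
def normMeas (S : NonlinearIFS) (n : ℕ) (A : Set ℝ) : ENNReal :=
  μH[S.h n] (A ∩ limitSet S.g n) / μH[S.h n] (limitSet S.g n)

/-!
Write `m` for the normalized `h_n`-dimensional Hausdorff measure on `J_n` and compare it with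
Lebesgue measure on the cone of functions `ψ ≥ 0` on `[0,1]` whose logarithm is `C`-Lipschitz. Let
`Λ` be the least constant with `∫ ψ dm ≤ Λ ∫ ψ dx` on this cone. Since `J_n ⊆ ⋃ g_k(J_n)`, the
measure `m` is dominated by its image under the dual of the transfer operator at exponent `h_n`,
and up to the factor `A = n^(2 (1 - h_n))` and an additive error `e^C / n` that operator may be
replaced by the one at exponent `1`, which does not increase Lebesgue integrals. Bounded distortion
and contraction show that the latter maps `ψ` to `q ∫ ψ dx` plus another element of the cone, with
`q > 0` independent of `n`. Hence `Λ ≤ A ((1 - q) Λ + q + e^C / n)`, and as `A → 1` by (N1), the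
limit superior of `Λ` is at most `1`. Testing with `ψ = exp (-C dist(·, Δ))` for large `C` bounds
`m(Δ)` by `(1 + ε) |Δ| ≤ (1 + ε) |Δ|^h_n`.
-/

open scoped NNReal ENNReal unitInterval

section LogLipschitz

variable {X : Type*} [PseudoMetricSpace X] {s t : Set X} {C D K : ℝ≥0} {φ ψ : X → ℝ}

/-- Nonnegative functions on `s` whose logarithm is `C`-Lipschitz. The two-point inequality avoids
taking logarithms, so that the zero function is included and these functions form a closed convex
cone. -/
structure LogLipschitzOn (C : ℝ≥0) (ψ : X → ℝ) (s : Set X) : Prop where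
  nonneg : ∀ x ∈ s, 0 ≤ ψ x
  le_exp_mul : ∀ x ∈ s, ∀ y ∈ s, ψ x ≤ Real.exp (C * dist x y) * ψ y

namespace LogLipschitzOn

lemma mono_set (hψ : LogLipschitzOn C ψ s) (hts : t ⊆ s) : LogLipschitzOn C ψ t where
  nonneg x hx := hψ.nonneg x (hts hx)
  le_exp_mul x hx y hy := hψ.le_exp_mul x (hts hx) y (hts hy)

lemma le_exp_mul_of_dist_le (hψ : LogLipschitzOn C ψ s) {r : ℝ} {x y : X} (hx : x ∈ s)
    (hy : y ∈ s) (hr : dist x y ≤ r) : ψ x ≤ Real.exp (C * r) * ψ y := by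
  have := hψ.nonneg y hy
  exact (hψ.le_exp_mul x hx y hy).trans (by gcongr)

lemma const {a : ℝ} (ha : 0 ≤ a) : LogLipschitzOn C (fun _ => a) s where
  nonneg _ _ := ha
  le_exp_mul _ _ _ _ := le_mul_of_one_le_left ha (Real.one_le_exp (by positivity))

lemma sum {ι : Type*} (T : Finset ι) {ψ : ι → X → ℝ} (hψ : ∀ i ∈ T, LogLipschitzOn C (ψ i) s) :
    LogLipschitzOn C (fun x => ∑ i ∈ T, ψ i x) s where
  nonneg x hx := Finset.sum_nonneg fun i hi => (hψ i hi).nonneg x hx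
  le_exp_mul x hx y hy := by
    rw [Finset.mul_sum]
    exact Finset.sum_le_sum fun i hi => (hψ i hi).le_exp_mul x hx y hy

lemma mul (hφ : LogLipschitzOn C φ s) (hψ : LogLipschitzOn D ψ s) :
    LogLipschitzOn (C + D) (fun x => φ x * ψ x) s where
  nonneg x hx := mul_nonneg (hφ.nonneg x hx) (hψ.nonneg x hx)
  le_exp_mul x hx y hy :=
    calc φ x * ψ x
        ≤ (Real.exp (C * dist x y) * φ y) * (Real.exp (D * dist x y) * ψ y) :=
          mul_le_mul (hφ.le_exp_mul x hx y hy) (hψ.le_exp_mul x hx y hy) (hψ.nonneg x hx)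
            (mul_nonneg (Real.exp_pos _).le (hφ.nonneg y hy))
      _ = Real.exp (↑(C + D) * dist x y) * (φ y * ψ y) := by
          rw [NNReal.coe_add, add_mul, Real.exp_add]; ring

lemma comp {Y : Type*} [PseudoMetricSpace Y] {f : Y → X} {t : Set Y} (hψ : LogLipschitzOn C ψ s)
    (hf : LipschitzOnWith K f t) (hmaps : MapsTo f t s) :
    LogLipschitzOn (C * K) (fun y => ψ (f y)) t where
  nonneg y hy := hψ.nonneg _ (hmaps hy)
  le_exp_mul x hx y hy := by
    refine (hψ.le_exp_mul_of_dist_le (hmaps hx) (hmaps hy) (hf.dist_le_mul x hx y hy)).trans_eq ?_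
    rw [NNReal.coe_mul, mul_assoc]

/-- By convexity `exp (D d) - 1 ≤ (D / C) (exp (C d) - 1)`, and this slack absorbs the constant. -/
lemma sub_const {a : ℝ} (hψ : LogLipschitzOn D ψ s) (hDC : D < C)
    (ha : ∀ x ∈ s, a ≤ (1 - D / C) * ψ x) : LogLipschitzOn C (fun x => ψ x - a) s where
  nonneg x hx := by
    have : 0 ≤ D / C * ψ x := mul_nonneg (by positivity) (hψ.nonneg x hx)
    linarith [ha x hx]
  le_exp_mul x hx y hy := by
    have hC : (0 : ℝ) < C := by exact_mod_cast hDC.pos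
    have hratio : (D / C : ℝ) ≤ 1 := (div_le_one hC).2 (by exact_mod_cast hDC.le)
    set d := dist x y
    have hconvex : Real.exp (D * d) ≤ D / C * Real.exp (C * d) + (1 - D / C) := by
      have := convexOn_exp.2 (mem_univ (C * d)) (mem_univ 0) (by positivity : (0 : ℝ) ≤ D / C)
        (sub_nonneg.2 hratio) (by ring)
      simpa only [smul_eq_mul, mul_zero, add_zero, Real.exp_zero, mul_one, ← mul_assoc,
        div_mul_cancel₀ _ hC.ne'] using this
    have hexp : 0 ≤ Real.exp (C * d) - 1 := sub_nonneg.2 (Real.one_le_exp (by positivity))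
    calc ψ x - a ≤ (D / C * Real.exp (C * d) + (1 - D / C)) * ψ y - a := by
          have := mul_le_mul_of_nonneg_right hconvex (hψ.nonneg y hy)
          linarith [hψ.le_exp_mul x hx y hy]
      _ = Real.exp (C * d) * ψ y - (Real.exp (C * d) - 1) * ((1 - D / C) * ψ y) - a := by ring
      _ ≤ Real.exp (C * d) * ψ y - (Real.exp (C * d) - 1) * a - a := by
          have := mul_le_mul_of_nonneg_left (ha y hy) hexp
          linarith
      _ = Real.exp (C * d) * (ψ y - a) := by ring

lemma exp_neg_mul_infDist (C : ℝ≥0) (A s : Set X) :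
    LogLipschitzOn C (fun x => Real.exp (-(C * Metric.infDist x A))) s where
  nonneg _ _ := (Real.exp_pos _).le
  le_exp_mul x _ y _ := by
    have := mul_le_mul_of_nonneg_left
      (Metric.infDist_le_infDist_add_dist (x := y) (y := x) (s := A)) C.coe_nonneg
    rw [← Real.exp_add, Real.exp_le_exp, dist_comm x y]
    linarith

lemma continuousOn (hψ : LogLipschitzOn C ψ s) : ContinuousOn ψ s := by
  intro y hy
  have htendsto (a : ℝ) :
      Tendsto (fun x => Real.exp (a * dist x y) * ψ y) (𝓝[s] y) (𝓝 (ψ y)) := by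
    have : Continuous fun x => Real.exp (a * dist x y) * ψ y := by fun_prop
    simpa using (this.tendsto y).mono_left nhdsWithin_le_nhds
  refine tendsto_of_tendsto_of_tendsto_of_le_of_le' (htendsto (-C)) (htendsto C) ?_ ?_
  · filter_upwards [self_mem_nhdsWithin] with x hx
    rw [neg_mul, Real.exp_neg, inv_mul_le_iff₀ (Real.exp_pos _), dist_comm]
    exact hψ.le_exp_mul y hy x hx
  · filter_upwards [self_mem_nhdsWithin] with x hx using hψ.le_exp_mul x hx y hy

lemma aemeasurable_enorm_rpow [MeasurableSpace X] [OpensMeasurableSpace X] {F : Type*}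
    [SeminormedAddGroup F] {f : X → F} (hf : LogLipschitzOn C (fun x => ‖f x‖) s)
    (hs : MeasurableSet s) (μ : Measure X) (h : ℝ) :
    AEMeasurable (fun x => ‖f x‖ₑ ^ h) (μ.restrict s) := by
  simpa only [ofReal_norm] using (hf.continuousOn.aemeasurable hs).ennreal_ofReal.pow_const h

section Integral

variable [MeasurableSpace X] [OpensMeasurableSpace X] (μ : Measure X)
  [IsFiniteMeasureOnCompacts μ]

lemma integrableOn [T2Space X] (hψ : LogLipschitzOn C ψ s) (hs : IsCompact s) :
    IntegrableOn ψ s μ :=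
  hψ.continuousOn.integrableOn_compact hs

lemma mul_measureReal_le_setIntegral [T2Space X] (hψ : LogLipschitzOn C ψ s) (hs : IsCompact s)
    {y : X} (hy : y ∈ s) :
    ψ y * μ.real s ≤ Real.exp (C * Metric.diam s) * ∫ x in s, ψ x ∂μ := by
  have hle : ∫ _ in s, ψ y ∂μ ≤ ∫ x in s, Real.exp (C * Metric.diam s) * ψ x ∂μ :=
    setIntegral_mono_on (integrableOn_const hs.measure_ne_top)
      ((hψ.integrableOn μ hs).const_mul _) hs.measurableSet fun x hx =>
      hψ.le_exp_mul_of_dist_le hy hx (Metric.dist_le_diam_of_mem hs.isBounded hy hx)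
  rwa [setIntegral_const, integral_const_mul, smul_eq_mul, mul_comm] at hle

lemma setIntegral_le_mul_measureReal [T2Space X] (hψ : LogLipschitzOn C ψ s) (hs : IsCompact s)
    {y : X} (hy : y ∈ s) :
    ∫ x in s, ψ x ∂μ ≤ Real.exp (C * Metric.diam s) * ψ y * μ.real s := by
  have hle : ∫ x in s, ψ x ∂μ ≤ ∫ _ in s, Real.exp (C * Metric.diam s) * ψ y ∂μ :=
    setIntegral_mono_on (hψ.integrableOn μ hs) (integrableOn_const hs.measure_ne_top)
      hs.measurableSet fun x hx =>
      hψ.le_exp_mul_of_dist_le hx hy (Metric.dist_le_diam_of_mem hs.isBounded hx hy)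
  rwa [setIntegral_const, smul_eq_mul, mul_comm] at hle

end Integral

lemma le_exp_mul_setIntegral_unitInterval {ψ : ℝ → ℝ} (hψ : LogLipschitzOn C ψ I) {y : ℝ}
    (hy : y ∈ I) : ψ y ≤ Real.exp C * ∫ x in I, ψ x := by
  simpa [Real.diam_Icc] using hψ.mul_measureReal_le_setIntegral volume isCompact_Icc hy

lemma exp_neg_mul_setIntegral_unitInterval_le {ψ : ℝ → ℝ} (hψ : LogLipschitzOn C ψ I) {y : ℝ}
    (hy : y ∈ I) : Real.exp (-C) * ∫ x in I, ψ x ≤ ψ y := by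
  rw [Real.exp_neg, inv_mul_le_iff₀ (Real.exp_pos _)]
  simpa [Real.diam_Icc] using hψ.setIntegral_le_mul_measureReal volume isCompact_Icc hy

end LogLipschitzOn

lemma integral_exp_neg_mul_infDist_le [MeasurableSpace X] [OpensMeasurableSpace X]
    (μ : Measure X) [IsFiniteMeasure μ] (C : ℝ≥0) {A : Set X} (hA : A.Nonempty) {η : ℝ} :
    ∫ x, Real.exp (-(C * Metric.infDist x A)) ∂μ ≤
      μ.real (Metric.cthickening η A) + Real.exp (-(C * η)) * μ.real univ := by
  have hmeas : MeasurableSet (Metric.cthickening η A) := Metric.isClosed_cthickening.measurableSet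
  have hint : Integrable ((Metric.cthickening η A).indicator fun _ => (1 : ℝ)) μ :=
    (integrable_const 1).indicator hmeas
  have hpoint (x : X) : Real.exp (-(C * Metric.infDist x A)) ≤
      (Metric.cthickening η A).indicator (fun _ => 1) x + Real.exp (-(C * η)) := by
    by_cases hx : x ∈ Metric.cthickening η A
    · have hle : Real.exp (-(C * Metric.infDist x A)) ≤ 1 :=
        Real.exp_le_one_iff.2 (neg_nonpos.2 (mul_nonneg C.coe_nonneg Metric.infDist_nonneg))
      rw [indicator_of_mem hx]
      linarith [Real.exp_pos (-(C * η))]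
    · have hη : η ≤ Metric.infDist x A := by
        by_contra! hlt
        refine hx ((ENNReal.le_ofReal_iff_toReal_le (Metric.infEDist_ne_top hA) ?_).2 hlt.le)
        exact Metric.infDist_nonneg.trans hlt.le
      rw [indicator_of_notMem hx, zero_add]
      gcongr
  calc ∫ x, Real.exp (-(C * Metric.infDist x A)) ∂μ
      ≤ ∫ x, ((Metric.cthickening η A).indicator (fun _ => 1) x + Real.exp (-(C * η))) ∂μ :=
        integral_mono_of_nonneg (.of_forall fun _ => (Real.exp_pos _).le)
          (hint.add (integrable_const _)) (.of_forall hpoint)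
    _ = μ.real (Metric.cthickening η A) + Real.exp (-(C * η)) * μ.real univ := by
        rw [integral_add hint (integrable_const _), integral_indicator_const _ hmeas,
          integral_const, smul_eq_mul, smul_eq_mul, mul_one,
          mul_comm (μ.real univ)]

lemma setIntegral_exp_neg_mul_infDist_Icc_le (C : ℝ≥0) {s t η : ℝ} (hst : s ≤ t) (hη : 0 ≤ η) :
    ∫ x in I, Real.exp (-(C * Metric.infDist x (Icc s t))) ≤
      t - s + 2 * η + Real.exp (-(C * η)) := by
  have hthick : (volume : Measure ℝ).real (Metric.cthickening η (Icc s t)) = t - s + 2 * η := by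
    rw [Real.Icc_eq_closedBall, cthickening_closedBall hη (by linarith),
      Real.volume_real_closedBall (by linarith)]
    ring
  have hrestrict : ((volume : Measure ℝ).restrict I).real (Metric.cthickening η (Icc s t)) ≤
      (volume : Measure ℝ).real (Metric.cthickening η (Icc s t)) := by
    rw [measureReal_restrict_apply' measurableSet_Icc]
    exact measureReal_mono inter_subset_left
      (Metric.isBounded_Icc s t).cthickening.measure_lt_top.ne
  have := integral_exp_neg_mul_infDist_le (volume.restrict I) C (nonempty_Icc.2 hst) (η := η)
  rw [measureReal_restrict_apply_univ, Real.volume_real_Icc_of_le zero_le_one] at this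
  linarith

end LogLipschitz

lemma rpow_le_rpow_sub_one_mul_add {a x h : ℝ} (ha : 0 ≤ a) (hx : 0 < x) (hh0 : 0 ≤ h)
    (hh1 : h ≤ 1) : a ^ h ≤ x ^ (h - 1) * (a + x) :=
  calc a ^ h ≤ (a + x) ^ h := Real.rpow_le_rpow ha (by linarith) hh0
    _ = (a + x) ^ (h - 1) * (a + x) := by
        rw [← Real.rpow_add_one (by positivity), sub_add_cancel]
    _ ≤ x ^ (h - 1) * (a + x) := by
        have := Real.rpow_le_rpow_of_nonpos hx (by linarith : x ≤ a + x) (sub_nonpos.2 hh1)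
        gcongr

lemma exists_mem_le_of_mapsTo_affine {P : Set ℝ} (hne : P.Nonempty) (hbdd : BddBelow P)
    (hclosed : IsClosed P) {a b L : ℝ} (hmaps : MapsTo (fun x => a * x + b) P P) (ha : a < 1)
    (hL : b ≤ L * (1 - a)) : ∃ x ∈ P, x ≤ L := by
  have hmem : sInf P ∈ P := hclosed.csInf_mem hne hbdd
  have hle : sInf P ≤ a * sInf P + b := csInf_le hbdd (hmaps hmem)
  refine ⟨sInf P, hmem, le_of_mul_le_mul_right ?_ (sub_pos.2 ha)⟩
  linarith

section HausdorffImage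

variable {F : Type*} [NormedAddCommGroup F] [NormedSpace ℝ F] [MeasurableSpace F] [BorelSpace F]
  {f f' : ℝ → F} {s A : Set ℝ} {c : ℝ≥0} {h : ℝ}

lemma hausdorffMeasure_image_le_mul_setLIntegral (hs : Convex ℝ s)
    (hf : ∀ x ∈ s, HasDerivWithinAt f (f' x) s x) (hf' : LogLipschitzOn c (fun x => ‖f' x‖) s)
    (hh : 0 ≤ h) {r : ℝ} (hr : ∀ x ∈ s, ∀ y ∈ s, dist x y ≤ r) (hA : A ⊆ s) :
    μH[h] (f '' A) ≤
      ENNReal.ofReal (Real.exp (2 * c * r)) ^ h * ∫⁻ x in A, ‖f' x‖ₑ ^ h ∂μH[h] := by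
  obtain rfl | ⟨x₀, hx₀⟩ := A.eq_empty_or_nonempty
  · simp
  set K : ℝ := Real.exp (c * r) * ‖f' x₀‖
  have hlip : LipschitzOnWith K.toNNReal f s := by
    refine hs.lipschitzOnWith_of_nnnorm_hasDerivWithin_le hf fun x hx => ?_
    rw [← NNReal.coe_le_coe, Real.coe_toNNReal K (by positivity), coe_nnnorm]
    exact hf'.le_exp_mul_of_dist_le hx (hA hx₀) (hr x hx x₀ (hA hx₀))
  have hK (x : ℝ) (hx : x ∈ A) : K ≤ Real.exp (2 * c * r) * ‖f' x‖ :=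
    calc K ≤ Real.exp (c * r) * (Real.exp (c * r) * ‖f' x‖) :=
          mul_le_mul_of_nonneg_left (hf'.le_exp_mul_of_dist_le (hA hx₀) (hA hx)
            (hr x₀ (hA hx₀) x (hA hx))) (Real.exp_pos _).le
      _ = Real.exp (2 * c * r) * ‖f' x‖ := by
          rw [← mul_assoc, ← Real.exp_add]
          ring_nf
  have hpoint (x : ℝ) (hx : x ∈ A) :
      (K.toNNReal : ℝ≥0∞) ^ h ≤ ENNReal.ofReal (Real.exp (2 * c * r)) ^ h * ‖f' x‖ₑ ^ h := by
    rw [← ENNReal.mul_rpow_of_nonneg _ _ hh, ← ofReal_norm,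
      ← ENNReal.ofReal_mul (Real.exp_pos _).le]
    exact ENNReal.rpow_le_rpow (ENNReal.ofReal_le_ofReal (hK x hx)) hh
  have hmeas : AEMeasurable (fun x => ‖f' x‖ₑ ^ h) (μH[h].restrict A) :=
    (hf'.aemeasurable_enorm_rpow hs.ordConnected.measurableSet _ h).mono_measure
      (Measure.restrict_mono_set _ hA)
  calc μH[h] (f '' A) ≤ (K.toNNReal : ℝ≥0∞) ^ h * μH[h] A :=
        (hlip.mono hA).hausdorffMeasure_image_le hh
    _ = ∫⁻ _ in A, (K.toNNReal : ℝ≥0∞) ^ h ∂μH[h] := (setLIntegral_const _ _).symm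
    _ ≤ ∫⁻ x in A, ENNReal.ofReal (Real.exp (2 * c * r)) ^ h * ‖f' x‖ₑ ^ h ∂μH[h] :=
        setLIntegral_mono_ae (hmeas.const_mul _) (.of_forall hpoint)
    _ = _ := lintegral_const_mul' _ _ (by finiteness)

lemma measure_image_le_mul_setLIntegral_of_forall_Ico {Y : Type*} [MeasurableSpace Y]
    (μ : Measure ℝ) (ν : Measure Y) {f : ℝ → Y} {φ : ℝ → ℝ≥0∞} {a : ℝ≥0∞} {r : ℝ} (hr : 0 < r)
    (hle : ∀ i : ℤ, ν (f '' (Ico (i • r) ((i + 1) • r) ∩ A)) ≤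
      a * ∫⁻ x in Ico (i • r) ((i + 1) • r) ∩ A, φ x ∂μ) :
    ν (f '' A) ≤ a * ∫⁻ x in A, φ x ∂μ := by
  have hA : A = ⋃ i : ℤ, Ico (i • r) ((i + 1) • r) ∩ A := by
    rw [← iUnion_inter, iUnion_Ico_zsmul hr, univ_inter]
  calc ν (f '' A) ≤ ∑' i : ℤ, ν (f '' (Ico (i • r) ((i + 1) • r) ∩ A)) := by
        conv_lhs => rw [hA, image_iUnion]
        exact measure_iUnion_le _
    _ ≤ ∑' i : ℤ, a * ∫⁻ x in Ico (i • r) ((i + 1) • r) ∩ A, φ x ∂μ := ENNReal.tsum_le_tsum hle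
    _ = a * ∫⁻ x in A, φ x ∂μ := by
        simp_rw [ENNReal.tsum_mul_left, ← Measure.restrict_restrict measurableSet_Ico]
        rw [← lintegral_iUnion (fun _ => measurableSet_Ico) (pairwise_disjoint_Ico_zsmul r),
          iUnion_Ico_zsmul hr, Measure.restrict_univ]

lemma hausdorffMeasure_image_le_setLIntegral (hs : Convex ℝ s)
    (hf : ∀ x ∈ s, HasDerivWithinAt f (f' x) s x) (hf' : LogLipschitzOn c (fun x => ‖f' x‖) s)
    (hh : 0 ≤ h) (hA : A ⊆ s) :
    μH[h] (f '' A) ≤ ∫⁻ x in A, ‖f' x‖ₑ ^ h ∂μH[h] := by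
  have hmesh (r : ℝ) (hr : 0 < r) : μH[h] (f '' A) ≤
      ENNReal.ofReal (Real.exp (2 * c * r)) ^ h * ∫⁻ x in A, ‖f' x‖ₑ ^ h ∂μH[h] := by
    refine measure_image_le_mul_setLIntegral_of_forall_Ico _ _ hr fun i => ?_
    refine hausdorffMeasure_image_le_mul_setLIntegral ((convex_Ico _ _).inter hs)
      (fun x hx => (hf x hx.2).mono inter_subset_right) (hf'.mono_set inter_subset_right) hh ?_
      (inter_subset_inter_right _ hA)
    rintro x ⟨hx, -⟩ y ⟨hy, -⟩
    rw [add_smul, one_smul] at hx hy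
    exact (Real.dist_le_of_mem_Icc (Ico_subset_Icc_self hx) (Ico_subset_Icc_self hy)).trans_eq
      (add_sub_cancel_left _ _)
  have hfactor : Tendsto (fun r : ℝ => ENNReal.ofReal (Real.exp (2 * c * r)) ^ h) (𝓝[>] 0)
      (𝓝 1) := by
    have hcont : Continuous fun r : ℝ => ENNReal.ofReal (Real.exp (2 * c * r)) ^ h :=
      ENNReal.continuous_rpow_const.comp (ENNReal.continuous_ofReal.comp (by fun_prop))
    simpa using (hcont.tendsto 0).mono_left nhdsWithin_le_nhds
  have hlim := ENNReal.Tendsto.mul_const (b := ∫⁻ x in A, ‖f' x‖ₑ ^ h ∂μH[h]) hfactor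
    (.inl one_ne_zero)
  rw [one_mul] at hlim
  exact ge_of_tendsto hlim (eventually_mem_nhdsWithin.mono hmesh)

end HausdorffImage

section LimitSet

variable {g : ℕ → ℝ → ℝ} {n : ℕ}

/-- The union of the level-`l` intervals `g_{i₁} ∘ ⋯ ∘ g_{i_l} ([0,1])` of the system
`g_1, …, g_n`. -/
def levelSet (g : ℕ → ℝ → ℝ) (n l : ℕ) : Set ℝ :=
  ⋃ w ∈ {w : List ℕ | w.length = l ∧ ∀ i ∈ w, 1 ≤ i ∧ i ≤ n}, wordComp g w '' I

lemma levelSet_zero : levelSet g n 0 = I := by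
  ext x
  simp [levelSet, wordComp]

lemma levelSet_succ (l : ℕ) : levelSet g n (l + 1) =
    ⋃ k : Finset.Icc 1 n, g k '' levelSet g n l := by
  ext x
  simp only [levelSet, mem_iUnion, mem_ofPred_eq, mem_image, Subtype.exists, Finset.mem_Icc]
  constructor
  · rintro ⟨_ | ⟨k, w⟩, ⟨hlength, hw⟩, y, hy, rfl⟩
    · simp at hlength
    · rw [List.forall_mem_cons] at hw
      exact ⟨k, hw.1, _, ⟨w, ⟨by simpa using hlength, hw.2⟩, y, hy, rfl⟩, rfl⟩
  · rintro ⟨k, hk, _, ⟨w, ⟨hlength, hw⟩, y, hy, rfl⟩, rfl⟩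
    exact ⟨k :: w, ⟨by simpa using hlength, List.forall_mem_cons.2 ⟨hk, hw⟩⟩, y, hy, rfl⟩

lemma levelSet_antitone (hmaps : ∀ k, 1 ≤ k → MapsTo (g k) I I) :
    Antitone (levelSet g n) := by
  refine antitone_nat_of_succ_le fun l => ?_
  induction l with
  | zero =>
    rw [levelSet_succ, levelSet_zero]
    exact iUnion_subset fun k => (hmaps k (Finset.mem_Icc.1 k.2).1).image_subset
  | succ l ih =>
    rw [levelSet_succ (l + 1)]
    conv_rhs => rw [levelSet_succ l]
    exact iUnion_mono fun k => image_mono ih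

lemma limitSet_eq_iInter_levelSet (hmaps : ∀ k, 1 ≤ k → MapsTo (g k) I I) :
    limitSet g n = ⋂ l, levelSet g n l :=
  (levelSet_antitone hmaps).iInter_nat_add 1

lemma limitSet_subset_unitInterval (hmaps : ∀ k, 1 ≤ k → MapsTo (g k) I I) :
    limitSet g n ⊆ I := by
  rw [limitSet_eq_iInter_levelSet hmaps, ← levelSet_zero (g := g) (n := n)]
  exact iInter_subset _ 0

lemma limitSet_subset_iUnion_image (hmaps : ∀ k, 1 ≤ k → MapsTo (g k) I I)
    (hinj : ∀ k, 1 ≤ k → InjOn (g k) I) :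
    limitSet g n ⊆ ⋃ k ∈ Finset.Icc 1 n, g k '' limitSet g n := by
  have hanti := levelSet_antitone (n := n) hmaps
  have hsub (l : ℕ) : levelSet g n l ⊆ I := levelSet_zero (g := g) (n := n) ▸ hanti l.zero_le
  calc limitSet g n = ⋂ l, ⋃ k : Finset.Icc 1 n, g k '' levelSet g n l :=
        iInter_congr levelSet_succ
    _ = ⋃ k : Finset.Icc 1 n, ⋂ l, g k '' levelSet g n l :=
        iInter_iUnion_of_antitone fun _ _ _ hle => image_mono (hanti hle)
    _ = ⋃ k : Finset.Icc 1 n, g k '' limitSet g n := by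
        refine iUnion_congr fun k => ?_
        rw [limitSet_eq_iInter_levelSet hmaps,
          ((hinj k (Finset.mem_Icc.1 k.2).1).mono (iUnion_subset hsub)).image_iInter_eq]
    _ ⊆ _ := iUnion_subset fun k => subset_biUnion_of_mem (u := fun k => g k '' limitSet g n) k.2

end LimitSet

lemma sum_setIntegral_le_of_pairwise_aedisjoint {X ι : Type*} [MeasurableSpace X] {μ : Measure X}
    {T : Finset ι} {s : ι → Set X} {t : Set X} {ψ : X → ℝ} (hψ : IntegrableOn ψ t μ)
    (hψ0 : 0 ≤ᵐ[μ.restrict t] ψ) (hs : ∀ i ∈ T, NullMeasurableSet (s i) μ)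
    (hdisj : (T : Set ι).Pairwise (Function.onFun (AEDisjoint μ) s))
    (hst : ∀ i ∈ T, s i ⊆ t) :
    ∑ i ∈ T, ∫ x in s i, ψ x ∂μ ≤ ∫ x in t, ψ x ∂μ := by
  have hsub : ⋃ i : T, s i ⊆ t := iUnion_subset fun i => hst i i.2
  have hsum := hasSum_integral_iUnion_ae (fun i : T => hs i i.2)
    (fun i j hij => hdisj i.2 j.2 (Subtype.coe_ne_coe.2 hij)) (hψ.mono_set hsub)
  calc ∑ i ∈ T, ∫ x in s i, ψ x ∂μ = ∑ i : T, ∫ x in s i, ψ x ∂μ :=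
        (Finset.sum_coe_sort T fun i => ∫ x in s i, ψ x ∂μ).symm
    _ = ∫ x in ⋃ i : T, s i, ψ x ∂μ := (hasSum_fintype _).unique hsum
    _ ≤ ∫ x in t, ψ x ∂μ := setIntegral_mono_set hψ hψ0 (.of_forall hsub)

section TransferOperator

variable {g g' : ℕ → ℝ → ℝ} {c α C : ℝ≥0} {n : ℕ} {h : ℝ} {ψ : ℝ → ℝ}

/-- An infinite system `g_1, g_2, …` of injective uniform contractions of `[0,1]` with uniformly
bounded distortion, whose images have pairwise Lebesgue-null intersections. `g' k` is the derivative
of `g k`; the entries with index `0` are irrelevant. -/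
structure IsBoundedDistortionIFS (g g' : ℕ → ℝ → ℝ) (c α : ℝ≥0) : Prop where
  mapsTo : ∀ k, 1 ≤ k → MapsTo (g k) I I
  injOn : ∀ k, 1 ≤ k → InjOn (g k) I
  hasDerivWithinAt : ∀ k, 1 ≤ k → ∀ x ∈ I, HasDerivWithinAt (g k) (g' k x) I x
  logLipschitzOn_deriv : ∀ k, 1 ≤ k → LogLipschitzOn c (fun x => |g' k x|) I
  abs_deriv_le : ∀ k, 1 ≤ k → ∀ x ∈ I, |g' k x| ≤ α
  aedisjoint_image : (Ici 1).Pairwise fun j k => AEDisjoint volume (g j '' I) (g k '' I)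
  contraction_lt_one : α < 1

/-- The transfer operator `ψ ↦ ∑ |g_k'|^h ψ ∘ g_k` of the system `g_1, …, g_n` at exponent `h`. -/
def transfer (g g' : ℕ → ℝ → ℝ) (n : ℕ) (h : ℝ) (ψ : ℝ → ℝ) (x : ℝ) : ℝ :=
  ∑ k ∈ Finset.Icc 1 n, |g' k x| ^ h * ψ (g k x)

namespace IsBoundedDistortionIFS

lemma continuousOn (hg : IsBoundedDistortionIFS g g' c α) {k : ℕ} (hk : 1 ≤ k) :
    ContinuousOn (g k) I :=
  fun x hx => (hg.hasDerivWithinAt k hk x hx).continuousWithinAt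

lemma lipschitzOnWith (hg : IsBoundedDistortionIFS g g' c α) {k : ℕ} (hk : 1 ≤ k) :
    LipschitzOnWith α (g k) I :=
  (convex_Icc 0 1).lipschitzOnWith_of_nnnorm_hasDerivWithin_le (hg.hasDerivWithinAt k hk)
    (hg.abs_deriv_le k hk)

lemma deriv_zero_ne_zero (hg : IsBoundedDistortionIFS g g' c α) {k : ℕ} (hk : 1 ≤ k) :
    g' k 0 ≠ 0 := by
  intro hzero
  have hderiv (x : ℝ) (hx : x ∈ I) : ‖g' k x‖ ≤ 0 := by
    simpa [hzero] using (hg.logLipschitzOn_deriv k hk).le_exp_mul x hx 0 unitInterval.zero_mem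
  have hle := (convex_Icc 0 1).norm_image_sub_le_of_norm_hasDerivWithin_le
    (hg.hasDerivWithinAt k hk) hderiv unitInterval.zero_mem unitInterval.one_mem
  rw [zero_mul, norm_le_zero_iff, sub_eq_zero] at hle
  exact one_ne_zero (hg.injOn k hk unitInterval.one_mem unitInterval.zero_mem hle)

lemma exists_pos_forall_le_abs_deriv (hg : IsBoundedDistortionIFS g g' c α) {k : ℕ}
    (hk : 1 ≤ k) : ∃ p > 0, ∀ x ∈ I, p ≤ |g' k x| := by
  refine ⟨Real.exp (-c) * |g' k 0|,
    mul_pos (Real.exp_pos _) (abs_pos.2 (hg.deriv_zero_ne_zero hk)), fun x hx => ?_⟩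
  rw [Real.exp_neg, inv_mul_le_iff₀ (Real.exp_pos _)]
  simpa using (hg.logLipschitzOn_deriv k hk).le_exp_mul_of_dist_le unitInterval.zero_mem hx
    (Real.dist_le_of_mem_Icc unitInterval.zero_mem hx)

lemma continuousOn_transfer (hg : IsBoundedDistortionIFS g g' c α) (hh : 0 ≤ h)
    (hψ : ContinuousOn ψ I) : ContinuousOn (transfer g g' n h ψ) I := by
  refine continuousOn_finsetSum _ fun k hk => ?_
  have hk := (Finset.mem_Icc.1 hk).1
  exact ((hg.logLipschitzOn_deriv k hk).continuousOn.rpow_const fun _ _ => .inr hh).mul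
    (hψ.comp (hg.continuousOn hk) (hg.mapsTo k hk))

lemma transfer_nonneg (hg : IsBoundedDistortionIFS g g' c α) (hψ : ∀ x ∈ I, 0 ≤ ψ x) {x : ℝ}
    (hx : x ∈ I) : 0 ≤ transfer g g' n h ψ x :=
  Finset.sum_nonneg fun k hk => mul_nonneg (by positivity)
    (hψ _ (hg.mapsTo k (Finset.mem_Icc.1 hk).1 hx))

lemma logLipschitzOn_transfer_one (hg : IsBoundedDistortionIFS g g' c α)
    (hψ : LogLipschitzOn C ψ I) : LogLipschitzOn (c + C * α) (transfer g g' n 1 ψ) I := by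
  refine LogLipschitzOn.sum _ fun k hk => ?_
  have hk := (Finset.mem_Icc.1 hk).1
  simpa only [Real.rpow_one] using
    (hg.logLipschitzOn_deriv k hk).mul (hψ.comp (hg.lipschitzOnWith hk) (hg.mapsTo k hk))

lemma setIntegral_transfer_one_le (hg : IsBoundedDistortionIFS g g' c α)
    (hψ : IntegrableOn ψ I) (hψ0 : ∀ x ∈ I, 0 ≤ ψ x) :
    ∫ x in I, transfer g g' n 1 ψ x ≤ ∫ x in I, ψ x := by
  have hsub (k : ℕ) (hk : k ∈ Finset.Icc 1 n) : g k '' I ⊆ I :=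
    (hg.mapsTo k (Finset.mem_Icc.1 hk).1).image_subset
  have hint (k : ℕ) (hk : k ∈ Finset.Icc 1 n) :
      IntegrableOn (fun x => |g' k x| * ψ (g k x)) I := by
    have hk1 := (Finset.mem_Icc.1 hk).1
    exact (integrableOn_image_iff_integrableOn_abs_deriv_smul measurableSet_Icc
      (hg.hasDerivWithinAt k hk1) (hg.injOn k hk1) ψ).1 (hψ.mono_set (hsub k hk))
  calc ∫ x in I, transfer g g' n 1 ψ x
      = ∑ k ∈ Finset.Icc 1 n, ∫ x in I, |g' k x| * ψ (g k x) := by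
        simp only [transfer, Real.rpow_one]
        exact integral_finsetSum _ hint
    _ = ∑ k ∈ Finset.Icc 1 n, ∫ x in g k '' I, ψ x := by
        refine Finset.sum_congr rfl fun k hk => ?_
        have hk1 := (Finset.mem_Icc.1 hk).1
        exact (integral_image_eq_integral_abs_deriv_smul measurableSet_Icc
          (hg.hasDerivWithinAt k hk1) (hg.injOn k hk1) ψ).symm
    _ ≤ ∫ x in I, ψ x := by
        refine sum_setIntegral_le_of_pairwise_aedisjoint hψ
          (ae_restrict_of_forall_mem measurableSet_Icc hψ0) (fun k hk => ?_) ?_ hsub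
        · exact (isCompact_Icc.image_of_continuousOn
            (hg.continuousOn (Finset.mem_Icc.1 hk).1)).measurableSet.nullMeasurableSet
        · exact hg.aedisjoint_image.mono fun k hk => (Finset.mem_Icc.1 hk).1

/-- Replacing `|g_k'|^h` by `|g_k'| + n⁻²` costs the factor `n^(2 (1 - h))`, and the `n` errors
`n⁻²` add up to `n⁻¹`. -/
lemma transfer_le_transfer_one (hg : IsBoundedDistortionIFS g g' c α) (hn : 1 ≤ n) (hh0 : 0 ≤ h)
    (hh1 : h ≤ 1) (hψ : LogLipschitzOn C ψ I) {x : ℝ} (hx : x ∈ I) :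
    transfer g g' n h ψ x ≤ ((n : ℝ) ^ 2)⁻¹ ^ (h - 1) *
      (transfer g g' n 1 ψ x + (n : ℝ)⁻¹ * (Real.exp C * ∫ y in I, ψ y)) := by
  have hn0 : (n : ℝ) ≠ 0 := by positivity
  set a := ((n : ℝ) ^ 2)⁻¹
  set M := Real.exp C * ∫ y in I, ψ y
  have hterm (k : ℕ) (hk : k ∈ Finset.Icc 1 n) : |g' k x| ^ h * ψ (g k x) ≤
      a ^ (h - 1) * (|g' k x| ^ (1 : ℝ) * ψ (g k x) + a * M) := by
    have hgx := hg.mapsTo k (Finset.mem_Icc.1 hk).1 hx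
    calc |g' k x| ^ h * ψ (g k x)
        ≤ a ^ (h - 1) * (|g' k x| + a) * ψ (g k x) :=
          mul_le_mul_of_nonneg_right (rpow_le_rpow_sub_one_mul_add (abs_nonneg _) (by positivity)
            hh0 hh1) (hψ.nonneg _ hgx)
      _ = a ^ (h - 1) * (|g' k x| ^ (1 : ℝ) * ψ (g k x) + a * ψ (g k x)) := by
          rw [Real.rpow_one]; ring
      _ ≤ _ := by
          gcongr
          exact hψ.le_exp_mul_setIntegral_unitInterval hgx
  calc transfer g g' n h ψ x
      ≤ ∑ k ∈ Finset.Icc 1 n, a ^ (h - 1) * (|g' k x| ^ (1 : ℝ) * ψ (g k x) + a * M) :=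
        Finset.sum_le_sum hterm
    _ = a ^ (h - 1) * (transfer g g' n 1 ψ x + n * (a * M)) := by
        rw [← Finset.mul_sum, Finset.sum_add_distrib, Finset.sum_const, Nat.card_Icc,
          Nat.add_sub_cancel, nsmul_eq_mul, transfer]
    _ = a ^ (h - 1) * (transfer g g' n 1 ψ x + (n : ℝ)⁻¹ * M) := by
        congr 2
        simp only [a]
        field_simp

lemma exists_pos_forall_logLipschitzOn_transfer_one_sub (hg : IsBoundedDistortionIFS g g' c α)
    (hC : c + C * α < C) :
    ∃ q > 0, ∀ n ≥ 1, ∀ ψ, LogLipschitzOn C ψ I →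
      LogLipschitzOn C (fun x => transfer g g' n 1 ψ x - q * ∫ y in I, ψ y) I := by
  obtain ⟨p, hp, hple⟩ := hg.exists_pos_forall_le_abs_deriv le_rfl
  have hgap : 0 < 1 - (↑(c + C * α) / C : ℝ) :=
    sub_pos.2 ((div_lt_one (by exact_mod_cast hC.pos)).2 (by exact_mod_cast hC))
  refine ⟨(1 - ↑(c + C * α) / C) * (p * Real.exp (-C)), by positivity, fun n hn ψ hψ => ?_⟩
  refine (hg.logLipschitzOn_transfer_one hψ).sub_const hC fun x hx => ?_
  have hfirst : p * (Real.exp (-C) * ∫ y in I, ψ y) ≤ |g' 1 x| ^ (1 : ℝ) * ψ (g 1 x) := by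
    rw [Real.rpow_one]
    exact mul_le_mul (hple x hx)
      (hψ.exp_neg_mul_setIntegral_unitInterval_le (hg.mapsTo 1 le_rfl hx))
      (mul_nonneg (Real.exp_pos _).le (setIntegral_nonneg measurableSet_Icc hψ.nonneg))
      (abs_nonneg _)
  have hsum : |g' 1 x| ^ (1 : ℝ) * ψ (g 1 x) ≤ transfer g g' n 1 ψ x :=
    Finset.single_le_sum (f := fun k => |g' k x| ^ (1 : ℝ) * ψ (g k x))
      (fun k hk => mul_nonneg (by positivity)
        (hψ.nonneg _ (hg.mapsTo k (Finset.mem_Icc.1 hk).1 hx)))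
      (Finset.mem_Icc.2 ⟨le_rfl, hn⟩)
  calc (1 - ↑(c + C * α) / C) * (p * Real.exp (-C)) * ∫ y in I, ψ y
      = (1 - ↑(c + C * α) / C) * (p * (Real.exp (-C) * ∫ y in I, ψ y)) := by ring
    _ ≤ (1 - ↑(c + C * α) / C) * transfer g g' n 1 ψ x :=
        mul_le_mul_of_nonneg_left (hfirst.trans hsum) hgap.le

end IsBoundedDistortionIFS

end TransferOperator

section Subconformal

lemma hausdorffMeasure_restrict_le_sum_map_withDensity {ι : Type*} {T : Finset ι}
    {f f' : ι → ℝ → ℝ} {s J : Set ℝ} {c : ℝ≥0} {h : ℝ} (hs : Convex ℝ s) (hh : 0 ≤ h)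
    (hf : ∀ k ∈ T, ∀ x ∈ s, HasDerivWithinAt (f k) (f' k x) s x)
    (hf' : ∀ k ∈ T, LogLipschitzOn c (fun x => ‖f' k x‖) s)
    (hJ : J ⊆ s) (hcover : J ⊆ ⋃ k ∈ T, f k '' J) :
    μH[h].restrict J ≤
      ∑ k ∈ T, ((μH[h].restrict J).withDensity fun x => ‖f' k x‖ₑ ^ h).map (f k) := by
  refine Measure.le_iff.2 fun E hE => ?_
  have hcoverE : E ∩ J ⊆ ⋃ k ∈ T, f k '' (f k ⁻¹' E ∩ J) := by
    rintro x ⟨hxE, hxJ⟩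
    obtain ⟨k, hk, y, hy, rfl⟩ := mem_iUnion₂.1 (hcover hxJ)
    exact mem_iUnion₂.2 ⟨k, hk, y, ⟨hxE, hy⟩, rfl⟩
  have hmap (k : ι) (hk : k ∈ T) :
      ((μH[h].restrict J).withDensity fun x => ‖f' k x‖ₑ ^ h).map (f k) E =
        ∫⁻ x in f k ⁻¹' E ∩ J, ‖f' k x‖ₑ ^ h ∂μH[h] := by
    have hcont : ContinuousOn (f k) s := fun x hx => (hf k hk x hx).continuousWithinAt
    have hmeas : AEMeasurable (f k) (μH[h].restrict J) :=
      (hcont.aemeasurable hs.ordConnected.measurableSet).mono_measure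
        (Measure.restrict_mono_set _ hJ)
    have hpre : NullMeasurableSet (f k ⁻¹' E) (μH[h].restrict J) :=
      hmeas.nullMeasurableSet_preimage hE
    rw [Measure.map_apply_of_aemeasurable
      (hmeas.mono_ac (withDensity_absolutelyContinuous _ _)) hE, withDensity_apply₀ _ hpre,
      Measure.restrict_restrict₀ hpre]
  calc μH[h].restrict J E = μH[h] (E ∩ J) := Measure.restrict_apply hE
    _ ≤ ∑ k ∈ T, μH[h] (f k '' (f k ⁻¹' E ∩ J)) :=
        (measure_mono hcoverE).trans (measure_biUnion_finset_le _ _)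
    _ ≤ ∑ k ∈ T, ∫⁻ x in f k ⁻¹' E ∩ J, ‖f' k x‖ₑ ^ h ∂μH[h] :=
        Finset.sum_le_sum fun k hk => hausdorffMeasure_image_le_setLIntegral hs (hf k hk)
          (hf' k hk) hh (inter_subset_right.trans hJ)
    _ = _ := by
        rw [Measure.finsetSum_apply]
        exact Finset.sum_congr rfl fun k hk => (hmap k hk).symm

lemma setLIntegral_hausdorffMeasure_le_setLIntegral_sum {ι : Type*} {T : Finset ι}
    {f f' : ι → ℝ → ℝ} {s J : Set ℝ} {c : ℝ≥0} {h : ℝ} (hs : Convex ℝ s) (hh : 0 ≤ h)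
    (hf : ∀ k ∈ T, ∀ x ∈ s, HasDerivWithinAt (f k) (f' k x) s x)
    (hf' : ∀ k ∈ T, LogLipschitzOn c (fun x => ‖f' k x‖) s)
    (hJ : J ⊆ s) (hcover : J ⊆ ⋃ k ∈ T, f k '' J) {φ : ℝ → ℝ≥0∞} (hφ : Measurable φ) :
    ∫⁻ x in J, φ x ∂μH[h] ≤ ∫⁻ x in J, ∑ k ∈ T, ‖f' k x‖ₑ ^ h * φ (f k x) ∂μH[h] := by
  have hrestrict : μH[h].restrict J ≤ (μH[h] : Measure ℝ).restrict s :=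
    Measure.restrict_mono_set _ hJ
  have hmeas (k : ι) (hk : k ∈ T) : AEMeasurable (f k) (μH[h].restrict J) :=
    (ContinuousOn.aemeasurable (fun x hx => (hf k hk x hx).continuousWithinAt)
      hs.ordConnected.measurableSet).mono_measure hrestrict
  have hmeas' (k : ι) (hk : k ∈ T) :
      AEMeasurable (fun x => ‖f' k x‖ₑ ^ h) (μH[h].restrict J) :=
    ((hf' k hk).aemeasurable_enorm_rpow hs.ordConnected.measurableSet _ h).mono_measure hrestrict
  have hφf (k : ι) (hk : k ∈ T) : AEMeasurable (fun x => φ (f k x)) (μH[h].restrict J) :=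
    hφ.comp_aemeasurable (hmeas k hk)
  refine (lintegral_mono' (hausdorffMeasure_restrict_le_sum_map_withDensity hs hh hf hf' hJ hcover)
    le_rfl).trans_eq ?_
  rw [lintegral_finsetSum_measure,
    lintegral_finsetSum' _ fun k hk => (hmeas' k hk).fun_mul (hφf k hk)]
  refine Finset.sum_congr rfl fun k hk => ?_
  have hac := withDensity_absolutelyContinuous (μH[h].restrict J) fun x => ‖f' k x‖ₑ ^ h
  rw [lintegral_map' hφ.aemeasurable ((hmeas k hk).mono_ac hac),
    lintegral_withDensity_eq_lintegral_mul₀ (hmeas' k hk) (hφf k hk)]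
  rfl

variable {g g' : ℕ → ℝ → ℝ} {c α : ℝ≥0} {n : ℕ} {h : ℝ} {ψ : ℝ → ℝ}

/-- The measure `m` on `[0,1]` is dominated, on nonnegative continuous functions, by its image under
the dual of the transfer operator at exponent `h`; conformal measures satisfy this with equality. -/
def IsSubconformal (g g' : ℕ → ℝ → ℝ) (n : ℕ) (h : ℝ) (m : Measure ℝ) : Prop :=
  ∀ ψ : ℝ → ℝ, ContinuousOn ψ I → (∀ x ∈ I, 0 ≤ ψ x) →
    ∫ x in I, ψ x ∂m ≤ ∫ x in I, transfer g g' n h ψ x ∂m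

lemma ofReal_setIntegral_unitInterval (m : Measure ℝ) [IsFiniteMeasure m]
    (hψ : ContinuousOn ψ I) (hψ0 : ∀ x ∈ I, 0 ≤ ψ x) :
    ENNReal.ofReal (∫ x in I, ψ x ∂m) = ∫⁻ x in I, ENNReal.ofReal (ψ x) ∂m :=
  ofReal_integral_eq_lintegral_ofReal (hψ.integrableOn_compact isCompact_Icc)
    (ae_restrict_of_forall_mem measurableSet_Icc hψ0)

namespace IsBoundedDistortionIFS

lemma ofReal_transfer (hg : IsBoundedDistortionIFS g g' c α) (hh : 0 ≤ h)
    (hψ : ∀ x ∈ I, 0 ≤ ψ x) {x : ℝ} (hx : x ∈ I) :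
    ENNReal.ofReal (transfer g g' n h ψ x) =
      ∑ k ∈ Finset.Icc 1 n, ‖g' k x‖ₑ ^ h * ENNReal.ofReal (ψ (g k x)) := by
  rw [transfer, ENNReal.ofReal_sum_of_nonneg fun k hk => mul_nonneg (by positivity)
    (hψ _ (hg.mapsTo k (Finset.mem_Icc.1 hk).1 hx))]
  refine Finset.sum_congr rfl fun k _ => ?_
  rw [ENNReal.ofReal_mul (by positivity), ← ENNReal.ofReal_rpow_of_nonneg (abs_nonneg _) hh,
    ← Real.norm_eq_abs, ofReal_norm]

lemma isSubconformal_cond_hausdorffMeasure (hg : IsBoundedDistortionIFS g g' c α) (hh : 0 ≤ h) :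
    IsSubconformal g g' n h (ProbabilityTheory.cond μH[h] (limitSet g n)) := by
  intro ψ hψ hψ0
  have hJ : limitSet g n ⊆ I := limitSet_subset_unitInterval hg.mapsTo
  set φ : ℝ → ℝ≥0∞ := fun x => ENNReal.ofReal (ψ (projIcc 0 1 zero_le_one x))
  have hφ : Measurable φ :=
    (hψ.comp_continuous (by fun_prop) fun x => (projIcc 0 1 _ x).2).measurable.ennreal_ofReal
  have hφ_eq (x : ℝ) (hx : x ∈ I) : φ x = ENNReal.ofReal (ψ x) := by
    simp only [φ, projIcc_of_mem zero_le_one hx]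
  have htransfer (x : ℝ) (hx : x ∈ I) : ENNReal.ofReal (transfer g g' n h ψ x) =
      ∑ k ∈ Finset.Icc 1 n, ‖g' k x‖ₑ ^ h * φ (g k x) := by
    rw [hg.ofReal_transfer hh hψ0 hx]
    exact Finset.sum_congr rfl fun k hk => by
      rw [hφ_eq _ (hg.mapsTo k (Finset.mem_Icc.1 hk).1 hx)]
  have hrestrict : (ProbabilityTheory.cond μH[h] (limitSet g n)).restrict I =
      (μH[h] (limitSet g n))⁻¹ • μH[h].restrict (limitSet g n) := by
    rw [ProbabilityTheory.cond, Measure.restrict_smul, Measure.restrict_restrict measurableSet_Icc,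
      inter_eq_right.2 hJ]
  have htransfer_nonneg (x : ℝ) (hx : x ∈ I) : 0 ≤ transfer g g' n h ψ x :=
    hg.transfer_nonneg hψ0 hx
  rw [← ENNReal.ofReal_le_ofReal_iff (setIntegral_nonneg measurableSet_Icc htransfer_nonneg),
    ofReal_setIntegral_unitInterval _ hψ hψ0,
    ofReal_setIntegral_unitInterval _ (hg.continuousOn_transfer hh hψ) htransfer_nonneg,
    setLIntegral_congr_fun measurableSet_Icc htransfer,
    ← setLIntegral_congr_fun measurableSet_Icc hφ_eq, hrestrict,
    lintegral_smul_measure, lintegral_smul_measure, smul_eq_mul, smul_eq_mul]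
  exact mul_le_mul_right (setLIntegral_hausdorffMeasure_le_setLIntegral_sum (convex_Icc 0 1) hh
    (fun k hk => hg.hasDerivWithinAt k (Finset.mem_Icc.1 hk).1)
    (fun k hk => hg.logLipschitzOn_deriv k (Finset.mem_Icc.1 hk).1) hJ
    (limitSet_subset_iUnion_image hg.mapsTo hg.injOn) hφ) _

end IsBoundedDistortionIFS

end Subconformal

section ConeBound

variable {g g' : ℕ → ℝ → ℝ} {c α C : ℝ≥0} {n : ℕ} {h q Λ Λ' : ℝ} {m : Measure ℝ}

/-- On the cone of log-Lipschitz functions with constant `C`, integration against `m` over `[0,1]`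
is at most `Λ` times Lebesgue integration. -/
def IsConeBound (C : ℝ≥0) (m : Measure ℝ) (Λ : ℝ) : Prop :=
  ∀ ψ : ℝ → ℝ, LogLipschitzOn C ψ I → ∫ x in I, ψ x ∂m ≤ Λ * ∫ x in I, ψ x

lemma isConeBound_exp [IsZeroOrProbabilityMeasure m] : IsConeBound C m (Real.exp C) := by
  intro ψ hψ
  have hnonneg : 0 ≤ Real.exp C * ∫ x in I, ψ x :=
    mul_nonneg (Real.exp_pos _).le (setIntegral_nonneg measurableSet_Icc hψ.nonneg)
  calc ∫ x in I, ψ x ∂m ≤ ∫ _ in I, (Real.exp C * ∫ y in I, ψ y) ∂m :=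
        setIntegral_mono_on (hψ.integrableOn m isCompact_Icc) (integrable_const _)
          measurableSet_Icc fun x hx => hψ.le_exp_mul_setIntegral_unitInterval hx
    _ = m.real I * (Real.exp C * ∫ y in I, ψ y) := by rw [setIntegral_const, smul_eq_mul]
    _ ≤ Real.exp C * ∫ y in I, ψ y := mul_le_of_le_one_left hnonneg measureReal_le_one

namespace IsConeBound

lemma mono (hΛ : IsConeBound C m Λ) (hle : Λ ≤ Λ') : IsConeBound C m Λ' := fun ψ hψ =>
  (hΛ ψ hψ).trans <| mul_le_mul_of_nonneg_right hle <|
    setIntegral_nonneg measurableSet_Icc hψ.nonneg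

lemma nonneg (hΛ : IsConeBound C m Λ) : 0 ≤ Λ := by
  have hone := hΛ (fun _ => 1) (LogLipschitzOn.const zero_le_one)
  simp only [setIntegral_const, Real.volume_real_Icc_of_le zero_le_one, smul_eq_mul, mul_one,
    sub_zero] at hone
  exact measureReal_nonneg.trans hone

lemma isClosed_setOf (C : ℝ≥0) (m : Measure ℝ) : IsClosed {Λ | IsConeBound C m Λ} := by
  simp only [IsConeBound, ofPred_forall]
  exact isClosed_iInter fun ψ => isClosed_iInter fun _ => isClosed_le (by fun_prop) (by fun_prop)

end IsConeBound

namespace IsBoundedDistortionIFS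

lemma setIntegral_transfer_one_le_of_isConeBound (hg : IsBoundedDistortionIFS g g' c α)
    [IsZeroOrProbabilityMeasure m] (hq : 0 ≤ q)
    (hsub : ∀ ψ, LogLipschitzOn C ψ I →
      LogLipschitzOn C (fun x => transfer g g' n 1 ψ x - q * ∫ y in I, ψ y) I)
    (hΛ : IsConeBound C m Λ) {ψ : ℝ → ℝ} (hψ : LogLipschitzOn C ψ I) :
    ∫ x in I, transfer g g' n 1 ψ x ∂m ≤ (Λ * (1 - q) + q) * ∫ x in I, ψ x := by
  have hint (μ : Measure ℝ) [IsFiniteMeasureOnCompacts μ] :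
      IntegrableOn (transfer g g' n 1 ψ) I μ :=
    (hg.continuousOn_transfer zero_le_one hψ.continuousOn).integrableOn_compact isCompact_Icc
  have hψ0 : 0 ≤ ∫ x in I, ψ x := setIntegral_nonneg measurableSet_Icc hψ.nonneg
  have hcone := hΛ _ (hsub ψ hψ)
  rw [integral_sub (hint m) (integrable_const _), setIntegral_const, integral_sub (hint volume)
    (integrable_const _), setIntegral_const, Real.volume_real_Icc_of_le zero_le_one] at hcone
  simp only [smul_eq_mul, sub_zero, one_mul] at hcone
  have hmass : m.real I * (q * ∫ x in I, ψ x) ≤ q * ∫ x in I, ψ x :=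
    mul_le_of_le_one_left (mul_nonneg hq hψ0) measureReal_le_one
  have htransfer : Λ * ∫ x in I, transfer g g' n 1 ψ x ≤ Λ * ∫ x in I, ψ x :=
    mul_le_mul_of_nonneg_left
      (hg.setIntegral_transfer_one_le (hψ.integrableOn volume isCompact_Icc) hψ.nonneg) hΛ.nonneg
  linarith

lemma isConeBound_affine (hg : IsBoundedDistortionIFS g g' c α) [IsZeroOrProbabilityMeasure m]
    (hn : 1 ≤ n) (hh0 : 0 ≤ h) (hh1 : h ≤ 1) (hq : 0 ≤ q)
    (hsub : ∀ ψ, LogLipschitzOn C ψ I →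
      LogLipschitzOn C (fun x => transfer g g' n 1 ψ x - q * ∫ y in I, ψ y) I)
    (hm : IsSubconformal g g' n h m) (hΛ : IsConeBound C m Λ) :
    IsConeBound C m (((n : ℝ) ^ 2)⁻¹ ^ (h - 1) * (1 - q) * Λ +
      ((n : ℝ) ^ 2)⁻¹ ^ (h - 1) * (q + (n : ℝ)⁻¹ * Real.exp C)) := by
  intro ψ hψ
  set A := ((n : ℝ) ^ 2)⁻¹ ^ (h - 1)
  set M := (n : ℝ)⁻¹ * (Real.exp C * ∫ y in I, ψ y)
  have hint (p : ℝ) (hp : 0 ≤ p) : IntegrableOn (transfer g g' n p ψ) I m :=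
    (hg.continuousOn_transfer hp hψ.continuousOn).integrableOn_compact isCompact_Icc
  have hM : 0 ≤ M := mul_nonneg (by positivity)
    (mul_nonneg (Real.exp_pos _).le (setIntegral_nonneg measurableSet_Icc hψ.nonneg))
  calc ∫ x in I, ψ x ∂m ≤ ∫ x in I, transfer g g' n h ψ x ∂m := hm ψ hψ.continuousOn hψ.nonneg
    _ ≤ ∫ x in I, A * (transfer g g' n 1 ψ x + M) ∂m :=
        setIntegral_mono_on (hint h hh0)
          (((hint 1 zero_le_one).add (integrable_const M)).const_mul A) measurableSet_Icc
          fun x hx => hg.transfer_le_transfer_one hn hh0 hh1 hψ hx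
    _ = A * ((∫ x in I, transfer g g' n 1 ψ x ∂m) + m.real I * M) := by
        rw [integral_const_mul, integral_add (hint 1 zero_le_one) (integrable_const M),
          setIntegral_const, smul_eq_mul]
    _ ≤ A * ((Λ * (1 - q) + q) * (∫ x in I, ψ x) + M) := by
        gcongr
        · exact hg.setIntegral_transfer_one_le_of_isConeBound hq hsub hΛ hψ
        · exact mul_le_of_le_one_left hM measureReal_le_one
    _ = (A * (1 - q) * Λ + A * (q + (n : ℝ)⁻¹ * Real.exp C)) * ∫ x in I, ψ x := by
        simp only [M]; ring

/-- The optimal `Λ` is mapped by the affine self-map of the cone bounds to a number that is not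
smaller, so it lies below the fixed point of that map. -/
lemma isConeBound_of_isSubconformal (hg : IsBoundedDistortionIFS g g' c α)
    [IsZeroOrProbabilityMeasure m] (hn : 1 ≤ n) (hh0 : 0 ≤ h) (hh1 : h ≤ 1) (hq : 0 ≤ q)
    (hsub : ∀ ψ, LogLipschitzOn C ψ I →
      LogLipschitzOn C (fun x => transfer g g' n 1 ψ x - q * ∫ y in I, ψ y) I)
    (hm : IsSubconformal g g' n h m) (hslope : ((n : ℝ) ^ 2)⁻¹ ^ (h - 1) * (1 - q) < 1)
    (hΛ : ((n : ℝ) ^ 2)⁻¹ ^ (h - 1) * (q + (n : ℝ)⁻¹ * Real.exp C) ≤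
      Λ * (1 - ((n : ℝ) ^ 2)⁻¹ ^ (h - 1) * (1 - q))) :
    IsConeBound C m Λ := by
  obtain ⟨Λ', hΛ', hle⟩ := exists_mem_le_of_mapsTo_affine (P := {Λ | IsConeBound C m Λ})
    ⟨_, isConeBound_exp⟩ ⟨0, fun _ => IsConeBound.nonneg⟩ (IsConeBound.isClosed_setOf C m)
    (fun _ => hg.isConeBound_affine hn hh0 hh1 hq hsub hm) hslope hΛ
  exact IsConeBound.mono hΛ' hle

end IsBoundedDistortionIFS

lemma tendsto_inv_sq_rpow_sub_one {h : ℕ → ℝ}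
    (hlog : Tendsto (fun n : ℕ => (1 - h n) * Real.log n) atTop (𝓝 0)) :
    Tendsto (fun n : ℕ => ((n : ℝ) ^ 2)⁻¹ ^ (h n - 1)) atTop (𝓝 1) := by
  have hexp : Tendsto (fun n : ℕ => Real.exp (2 * ((1 - h n) * Real.log n))) atTop (𝓝 1) := by
    simpa using (hlog.const_mul 2).rexp
  refine hexp.congr' ?_
  filter_upwards [eventually_ge_atTop 1] with n hn
  rw [Real.rpow_def_of_pos (by positivity), Real.log_inv, Real.log_pow]
  push_cast
  ring_nf

lemma eventually_pos_of_tendsto_one_sub_mul_log {h : ℕ → ℝ}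
    (hlog : Tendsto (fun n : ℕ => (1 - h n) * Real.log n) atTop (𝓝 0)) :
    ∀ᶠ n in atTop, 0 < h n := by
  have hlog_ge := (Real.tendsto_log_atTop.comp tendsto_natCast_atTop_atTop).eventually_ge_atTop 1
  filter_upwards [hlog.eventually_lt_const one_pos, hlog_ge] with n hlt hge
  simp only [Function.comp_apply] at hge
  nlinarith

lemma IsBoundedDistortionIFS.eventually_forall_isConeBound (hg : IsBoundedDistortionIFS g g' c α)
    (hC : c + C * α < C) {h : ℕ → ℝ} (hh : ∀ n ≥ 1, h n ≤ 1)
    (hlog : Tendsto (fun n : ℕ => (1 - h n) * Real.log n) atTop (𝓝 0)) (hΛ : 1 < Λ) :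
    ∀ᶠ n in atTop, ∀ (m : Measure ℝ) [IsZeroOrProbabilityMeasure m],
      IsSubconformal g g' n (h n) m → IsConeBound C m Λ := by
  obtain ⟨q, hq, hsub⟩ := hg.exists_pos_forall_logLipschitzOn_transfer_one_sub hC
  have hA := tendsto_inv_sq_rpow_sub_one hlog
  have hslope : Tendsto (fun n : ℕ => ((n : ℝ) ^ 2)⁻¹ ^ (h n - 1) * (1 - q)) atTop (𝓝 (1 - q)) := by
    simpa using hA.mul_const (1 - q)
  have hconst : Tendsto (fun n : ℕ => ((n : ℝ) ^ 2)⁻¹ ^ (h n - 1) * (q + (n : ℝ)⁻¹ * Real.exp C))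
      atTop (𝓝 q) := by
    simpa using hA.mul ((tendsto_inv_atTop_nhds_zero_nat.mul_const (Real.exp C)).const_add q)
  have hbound := hconst.eventually_lt ((hslope.const_sub 1).const_mul Λ)
    (by rw [sub_sub_cancel]; exact lt_mul_of_one_lt_left hq hΛ)
  filter_upwards [eventually_ge_atTop 1, eventually_pos_of_tendsto_one_sub_mul_log hlog,
    hslope.eventually_lt_const (sub_lt_self 1 hq), hbound] with n hn hpos hslope_lt hlt m _ hm
  exact hg.isConeBound_of_isSubconformal hn hpos.le (hh n hn) hq.le (hsub n hn) hm hslope_lt hlt.le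

end ConeBound

section Density

variable {g g' : ℕ → ℝ → ℝ} {c α C : ℝ≥0} {h : ℕ → ℝ} {Λ : ℝ} {m : Measure ℝ}

lemma IsConeBound.measureReal_Icc_le [IsFiniteMeasure m] (hΛ : IsConeBound C m Λ) {s t η : ℝ}
    (hst : s ≤ t) (hsub : Icc s t ⊆ I) (hη : 0 ≤ η) :
    m.real (Icc s t) ≤ Λ * (t - s + 2 * η + Real.exp (-(C * η))) := by
  set ψ : ℝ → ℝ := fun x => Real.exp (-(C * Metric.infDist x (Icc s t)))
  have hψ : LogLipschitzOn C ψ I := LogLipschitzOn.exp_neg_mul_infDist C (Icc s t) I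
  have hψ_one (x : ℝ) (hx : x ∈ Icc s t) : ψ x = 1 := by
    simp only [ψ, Metric.infDist_zero_of_mem hx, mul_zero, neg_zero, Real.exp_zero]
  calc m.real (Icc s t) = ∫ x in Icc s t, ψ x ∂m := by
        rw [setIntegral_congr_fun measurableSet_Icc hψ_one, setIntegral_const, smul_eq_mul, mul_one]
    _ ≤ ∫ x in I, ψ x ∂m :=
        setIntegral_mono_set (hψ.integrableOn m isCompact_Icc)
          (.of_forall fun _ => (Real.exp_pos _).le) (.of_forall hsub)
    _ ≤ Λ * ∫ x in I, ψ x := hΛ ψ hψ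
    _ ≤ Λ * (t - s + 2 * η + Real.exp (-(C * η))) :=
        mul_le_mul_of_nonneg_left (setIntegral_exp_neg_mul_infDist_Icc_le C hst hη) hΛ.nonneg

lemma exists_nnreal_add_mul_lt_and_exp_neg_mul_le (c : ℝ≥0) (hα : α < 1) {η τ : ℝ} (hη : 0 < η)
    (hτ : 0 < τ) : ∃ C : ℝ≥0, c + C * α < C ∧ Real.exp (-(C * η)) ≤ τ := by
  have hgap : Tendsto (fun C : ℝ≥0 => (C : ℝ) * (1 - α)) atTop atTop :=
    (NNReal.tendsto_coe_atTop.2 tendsto_id).atTop_mul_const (sub_pos.2 (by exact_mod_cast hα))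
  have hexp : Tendsto (fun C : ℝ≥0 => Real.exp (-(C * η))) atTop (𝓝 0) :=
    Real.tendsto_exp_neg_atTop_nhds_zero.comp
      ((NNReal.tendsto_coe_atTop.2 tendsto_id).atTop_mul_const hη)
  obtain ⟨C, hC, hCτ⟩ := ((hgap.eventually_gt_atTop c).and (hexp.eventually_le_const hτ)).exists
  refine ⟨C, ?_, hCτ⟩
  rw [← NNReal.coe_lt_coe]
  push_cast
  linarith

lemma IsBoundedDistortionIFS.eventually_forall_measureReal_Icc_le
    (hg : IsBoundedDistortionIFS g g' c α) (hh : ∀ n ≥ 1, h n ≤ 1)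
    (hlog : Tendsto (fun n : ℕ => (1 - h n) * Real.log n) atTop (𝓝 0)) {δ ε : ℝ} (hδ : 0 < δ)
    (hε : 0 < ε) :
    ∀ᶠ n in atTop, ∀ (m : Measure ℝ) [IsZeroOrProbabilityMeasure m],
      IsSubconformal g g' n (h n) m → ∀ s t : ℝ, 0 ≤ s → t ≤ 1 → δ ≤ t - s →
        m.real (Icc s t) ≤ (1 + ε) * (t - s) := by
  set Λ := √(1 + ε)
  have hΛ : 1 < Λ := Real.lt_sqrt_of_sq_lt (by linarith)
  have hslack : 0 < (Λ - 1) * δ := mul_pos (sub_pos.2 hΛ) hδ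
  obtain ⟨C, hC, hexp⟩ := exists_nnreal_add_mul_lt_and_exp_neg_mul_le c hg.contraction_lt_one
    (η := (Λ - 1) * δ / 4) (τ := (Λ - 1) * δ / 2) (div_pos hslack four_pos) (half_pos hslack)
  filter_upwards [hg.eventually_forall_isConeBound hC hh hlog hΛ] with n hbound m _ hm s t hs ht hst
  calc m.real (Icc s t)
      ≤ Λ * (t - s + 2 * ((Λ - 1) * δ / 4) + Real.exp (-(C * ((Λ - 1) * δ / 4)))) :=
        (hbound m hm).measureReal_Icc_le (by linarith) (Icc_subset_Icc hs ht)
          (div_pos hslack four_pos).le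
    _ ≤ Λ * (Λ * (t - s)) := by
        have := mul_le_mul_of_nonneg_left hst (sub_pos.2 hΛ).le
        gcongr
        linarith
    _ = (1 + ε) * (t - s) := by rw [← mul_assoc, Real.mul_self_sqrt (by positivity)]

lemma le_one_of_dimH_eq_ofReal {J : Set ℝ} {d : ℝ} (hd : dimH J = ENNReal.ofReal d) : d ≤ 1 := by
  rw [← ENNReal.ofReal_le_one, ← hd, ← Real.dimH_univ]
  exact dimH_mono (subset_univ J)

theorem nonlinear_density_long_intervals_general (hg : IsBoundedDistortionIFS g g' c α)
    (hdim : ∀ n ≥ 1, dimH (limitSet g n) = ENNReal.ofReal (h n))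
    (hlog : Tendsto (fun n : ℕ => (1 - h n) * Real.log n) atTop (𝓝 0)) {δ ε : ℝ} (hδ : 0 < δ)
    (hε : 0 < ε) :
    ∃ n₀ : ℕ, ∀ n ≥ n₀, ∀ s t : ℝ, 0 ≤ s → t ≤ 1 → δ ≤ t - s →
      μH[h n] (Icc s t ∩ limitSet g n) / μH[h n] (limitSet g n) /
        ENNReal.ofReal ((t - s) ^ h n) ≤ ENNReal.ofReal (1 + ε) := by
  have hh (n : ℕ) (hn : n ≥ 1) : h n ≤ 1 := le_one_of_dimH_eq_ofReal (hdim n hn)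
  refine eventually_atTop.1 ?_
  filter_upwards [eventually_ge_atTop 1, eventually_pos_of_tendsto_one_sub_mul_log hlog,
    hg.eventually_forall_measureReal_Icc_le hh hlog hδ hε] with n hn hpos hle s t hs ht hst
  set m := ProbabilityTheory.cond μH[h n] (limitSet g n)
  have hm : μH[h n] (Icc s t ∩ limitSet g n) / μH[h n] (limitSet g n) = m (Icc s t) := by
    rw [ProbabilityTheory.cond_apply' measurableSet_Icc, inter_comm, ENNReal.div_eq_inv_mul]
  have hrpow : t - s ≤ (t - s) ^ h n := by
    simpa using Real.rpow_le_rpow_of_exponent_ge (hδ.trans_le hst) (by linarith) (hh n hn)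
  rw [hm, ← ofReal_measureReal]
  refine ENNReal.div_le_of_le_mul ?_
  rw [← ENNReal.ofReal_mul (by positivity)]
  refine ENNReal.ofReal_le_ofReal
    ((hle m (hg.isSubconformal_cond_hausdorffMeasure hpos.le) s t hs ht hst).trans ?_)
  gcongr

end Density

lemma LogLipschitzOn.abs_of_abs_deriv_div_le {f f' : ℝ → ℝ} {s : Set ℝ} {c : ℝ≥0}
    (hs : Convex ℝ s) (hf : ∀ x ∈ s, HasDerivWithinAt f (f' x) s x) (hf0 : ∀ x ∈ s, f x ≠ 0)
    (hle : ∀ x ∈ s, |f' x / f x| ≤ c) : LogLipschitzOn c (fun x => |f x|) s where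
  nonneg _ _ := abs_nonneg _
  le_exp_mul x hx y hy := by
    have hlog : |Real.log (f x) - Real.log (f y)| ≤ c * |x - y| :=
      hs.norm_image_sub_le_of_norm_hasDerivWithin_le
        (fun z hz => (hf z hz).log (hf0 z hz)) hle hy hx
    rw [← Real.exp_log_eq_abs (hf0 x hx), ← Real.exp_log_eq_abs (hf0 y hy), ← Real.exp_add,
      Real.exp_le_exp, Real.dist_eq]
    linarith [le_abs_self (Real.log (f x) - Real.log (f y))]

lemma pairwise_aedisjoint_Icc_of_antitone {b : ℕ → ℝ} (hb : Antitone b) :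
    Pairwise fun j k : ℕ =>
      AEDisjoint volume (Icc (b j) (b (j - 1))) (Icc (b k) (b (k - 1))) := by
  have hlt {j k : ℕ} (hjk : j < k) :
      AEDisjoint volume (Icc (b j) (b (j - 1))) (Icc (b k) (b (k - 1))) := by
    refine measure_mono_null (fun x hx => ?_) (Real.volume_singleton (a := b j))
    exact le_antisymm (hx.2.2.trans (hb (Nat.le_pred_of_lt hjk))) hx.1.1
  intro j k hjk
  exact hjk.lt_or_gt.elim hlt fun hkj => (hlt hkj).symm

namespace NonlinearIFS

variable (S : NonlinearIFS)

lemma mapsTo_unitInterval {k : ℕ} (hk : 1 ≤ k) : MapsTo (S.g k) I I := by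
  rw [mapsTo_iff_image_subset, S.g_image k hk]
  exact Icc_subset_Icc (S.b_anti.antitone.le_of_tendsto S.b_lim k)
    (S.b_zero ▸ S.b_anti.antitone (k - 1).zero_le)

lemma exists_isBoundedDistortionIFS : ∃ c α, IsBoundedDistortionIFS S.g S.g' c α := by
  obtain ⟨c, hc0, hc⟩ := S.N3
  obtain ⟨α, hα1, hα⟩ := S.N5
  have hα0 : 0 ≤ α := (abs_nonneg _).trans (hα 1 le_rfl 0 unitInterval.zero_mem).le
  lift c to ℝ≥0 using hc0.le
  lift α to ℝ≥0 using hα0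
  refine ⟨c, α, {
    contraction_lt_one := by exact_mod_cast hα1
    mapsTo := fun k => S.mapsTo_unitInterval
    injOn := fun k hk => (S.g_anti k hk).injOn
    hasDerivWithinAt := fun k hk x hx => (S.deriv1 k hk x hx).hasDerivWithinAt
    logLipschitzOn_deriv := fun k hk => .abs_of_abs_deriv_div_le (convex_Icc 0 1)
      (fun x hx => (S.deriv2 k hk x hx).hasDerivWithinAt) (S.deriv_ne k hk)
      fun x hx => (hc k hk x hx).le
    abs_deriv_le := fun k hk x hx => (hα k hk x hx).le
    aedisjoint_image := fun j hj k hk hjk => ?_ }⟩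
  beta_reduce
  rw [S.g_image j hj, S.g_image k hk]
  exact pairwise_aedisjoint_Icc_of_antitone S.b_anti.antitone hjk

end NonlinearIFS

/-- In the nonlinear setting, for every `δ > 0` and `ε > 0`, the density of every closed
    interval `Δ ⊆ [0,1]` of length `≥ δ` is eventually at most `1 + ε`. -/
theorem nonlinear_density_long_intervals (S : NonlinearIFS) :
    ∀ δ > (0 : ℝ), ∀ ε > (0 : ℝ), ∃ n₀ : ℕ, ∀ n ≥ n₀, ∀ s t : ℝ,
      0 ≤ s → s ≤ t → t ≤ 1 → δ ≤ t - s →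
      normMeas S n (Set.Icc s t) / ENNReal.ofReal ((t - s) ^ S.h n) ≤
        ENNReal.ofReal (1 + ε) := by
  intro δ hδ ε hε
  obtain ⟨c, α, hg⟩ := S.exists_isBoundedDistortionIFS
  obtain ⟨n₀, hn₀⟩ := nonlinear_density_long_intervals_general hg S.h_dim S.N1 hδ hε
  exact ⟨n₀, fun n hn s t hs _ => hn₀ n hn s t hs⟩
end
end

section
/- In the nonlinear setting with standing conditions (N1)–(N5): for every ε > 0 there exist n_0 ∈ ℕ and r_0 > 0 such that for every n > n_0 and every r ∈ (0, r_0), one has m_n([0,r])/r^{h_n} ≤ 1 + ε. -/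
open Set Filter MeasureTheory Topology

noncomputable section

/-!
Put `s = h_n` and let `b_{p+1} ≤ r < b_p`. By self-similarity `J_n` is the union of the pieces
`g_k(J_n)`, and only those with `p < k ≤ n` meet `[0, r]`. Each `g_k` is Lipschitz on `[0, 1]` with
constant `κ(g_k) (b_{k-1} - b_k)`, so the pieces together have `s`-measure at most
`K^s ∑_{p < k ≤ n} (b_{k-1} - b_k)^s` times that of `J_n`, where `K` bounds the distortions
involved. Since `s ≤ 1`, concavity of `t ↦ t^s` bounds the sum by `n^{1-s} b_p^s`. As `r → 0` and
`n → ∞`, (N4) sends `K` to `1`, (N1) sends `n^{1-s}` to `1`, and (N2) sends `b_p / r` to `1`.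
-/

section Sequences

theorem sum_rpow_le_card_rpow_mul_sum_rpow {ι : Type*} (t : Finset ι) {f : ι → ℝ}
    (hf : ∀ i ∈ t, 0 ≤ f i) {s : ℝ} (hs₀ : 0 ≤ s) (hs₁ : s ≤ 1) :
    ∑ i ∈ t, f i ^ s ≤ (t.card : ℝ) ^ (1 - s) * (∑ i ∈ t, f i) ^ s := by
  rcases t.eq_empty_or_nonempty with rfl | ht
  · simp only [Finset.sum_empty]
    positivity
  have hcard : 0 < (t.card : ℝ) := by exact_mod_cast ht.card_pos
  have jensen : (t.card : ℝ)⁻¹ * ∑ i ∈ t, f i ^ s ≤ ((t.card : ℝ)⁻¹ * ∑ i ∈ t, f i) ^ s := by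
    simpa [Finset.mul_sum] using (Real.concaveOn_rpow hs₀ hs₁).le_map_sum
      (w := fun _ => (t.card : ℝ)⁻¹) (fun _ _ => by positivity) (by simp [hcard.ne']) hf
  calc ∑ i ∈ t, f i ^ s
      ≤ t.card * ((t.card : ℝ)⁻¹ * ∑ i ∈ t, f i) ^ s := (inv_mul_le_iff₀ hcard).1 jensen
    _ = (t.card : ℝ) ^ (1 - s) * (∑ i ∈ t, f i) ^ s := by
      rw [Real.mul_rpow (by positivity) (Finset.sum_nonneg hf), Real.inv_rpow hcard.le,
        Real.rpow_sub hcard, Real.rpow_one, div_eq_mul_inv, mul_assoc]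

theorem sum_Ico_rpow_sub_succ_le {b : ℕ → ℝ} (hb : Antitone b) (hb₀ : ∀ k, 0 ≤ b k) (p n : ℕ)
    {s : ℝ} (hs₀ : 0 ≤ s) (hs₁ : s ≤ 1) :
    ∑ k ∈ Finset.Ico p n, (b k - b (k + 1)) ^ s ≤ (n : ℝ) ^ (1 - s) * b p ^ s := by
  have hgap : ∀ k, 0 ≤ b k - b (k + 1) := fun k => sub_nonneg.2 (hb k.le_succ)
  have telescope : ∑ k ∈ Finset.Ico p n, (b k - b (k + 1)) ≤ b p := by
    rcases le_total p n with hpn | hnp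
    · have := Finset.sum_Ico_sub b hpn
      simp only [Finset.sum_sub_distrib] at this ⊢
      linarith [hb₀ n]
    · simpa [Finset.Ico_eq_empty_of_le hnp] using hb₀ p
  have hcard : ((Finset.Ico p n).card : ℝ) ≤ n := by simp
  calc ∑ k ∈ Finset.Ico p n, (b k - b (k + 1)) ^ s
      ≤ ((Finset.Ico p n).card : ℝ) ^ (1 - s) *
          (∑ k ∈ Finset.Ico p n, (b k - b (k + 1))) ^ s :=
        sum_rpow_le_card_rpow_mul_sum_rpow _ (fun k _ => hgap k) hs₀ hs₁
    _ ≤ (n : ℝ) ^ (1 - s) * b p ^ s := by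
      gcongr
      exacts [Real.rpow_nonneg (Finset.sum_nonneg fun k _ => hgap k) s,
        Finset.sum_nonneg fun k _ => hgap k]

theorem exists_ge_succ_le_and_lt {b : ℕ → ℝ} (hb : Tendsto b atTop (𝓝 0)) {N : ℕ} {r : ℝ}
    (hr : 0 < r) (hrN : r < b N) : ∃ p ≥ N, b (p + 1) ≤ r ∧ r < b p := by
  by_contra! hstep
  have hlt : ∀ p ≥ N, r < b p := fun p hp => by
    induction p, hp using Nat.le_induction with
    | base => exact hrN
    | succ p hp ih => exact not_le.1 fun hle => (hstep p hp hle).not_gt ih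
  exact hr.not_ge (ge_of_tendsto hb (eventually_atTop.2 ⟨N, fun p hp => (hlt p hp).le⟩))

theorem tendsto_one_of_tendsto_one_sub_mul_log {h : ℕ → ℝ}
    (hh : Tendsto (fun n : ℕ => (1 - h n) * Real.log n) atTop (𝓝 0)) :
    Tendsto h atTop (𝓝 1) := by
  have hlog : Tendsto (fun n : ℕ => Real.log n) atTop atTop :=
    Real.tendsto_log_atTop.comp tendsto_natCast_atTop_atTop
  have hquot := (hh.div_atTop hlog).const_sub 1
  rw [sub_zero] at hquot
  refine hquot.congr' ?_
  filter_upwards [hlog.eventually_gt_atTop 0] with n hn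
  rw [mul_div_cancel_right₀ _ hn.ne', sub_sub_cancel]

theorem tendsto_natCast_rpow_one_sub {h : ℕ → ℝ}
    (hh : Tendsto (fun n : ℕ => (1 - h n) * Real.log n) atTop (𝓝 0)) :
    Tendsto (fun n : ℕ => (n : ℝ) ^ (1 - h n)) atTop (𝓝 1) := by
  have hexp := (Real.continuous_exp.tendsto 0).comp hh
  rw [Real.exp_zero] at hexp
  refine hexp.congr' ?_
  filter_upwards [eventually_gt_atTop 0] with n hn
  rw [Function.comp_apply, Real.rpow_def_of_pos (by exact_mod_cast hn), mul_comm]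

-- An unbounded real supremum has the junk value `0`, so a nonzero one is a genuine upper bound.
theorem le_biSup_of_biSup_ne_zero {ι : Type*} {s : Set ι} {f : ι → ℝ}
    (hne : ⨆ i ∈ s, f i ≠ 0) {i : ι} (hi : i ∈ s) : f i ≤ ⨆ i ∈ s, f i := by
  have hbdd : BddAbove (range fun i => ⨆ _ : i ∈ s, f i) :=
    not_imp_comm.1 Real.iSup_of_not_bddAbove hne
  simpa only [ciSup_pos hi] using le_ciSup hbdd i

theorem eventually_le_mul_succ {b : ℕ → ℝ} (hb : ∀ k, 0 < b k)
    (hratio : Tendsto (fun n : ℕ => ⨆ k ∈ Ici n, b k / b (k + 1)) atTop (𝓝 1)) {K : ℝ}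
    (hK : 1 < K) : ∀ᶠ k in atTop, b k ≤ K * b (k + 1) := by
  filter_upwards [hratio.eventually_ne one_ne_zero, hratio.eventually_le_const hK] with k hne hle
  exact (div_le_iff₀ (hb (k + 1))).1 ((le_biSup_of_biSup_ne_zero hne self_mem_Ici).trans hle)

end Sequences

section Distortion

variable {f f' : ℝ → ℝ}

theorem distortion_nonneg (f' : ℝ → ℝ) : 0 ≤ distortion f' :=
  Real.iSup_nonneg fun _ => Real.iSup_nonneg fun _ => Real.iSup_nonneg fun _ =>
    Real.iSup_nonneg fun _ => by positivity

theorem abs_div_abs_le_distortion (hne : distortion f' ≠ 0) {x y : ℝ}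
    (hx : x ∈ Icc (0 : ℝ) 1) (hy : y ∈ Icc (0 : ℝ) 1) : |f' y| / |f' x| ≤ distortion f' := by
  set M : ℝ := ⨆ y ∈ Icc (0 : ℝ) 1, |f' y| with hM
  have hdist : distortion f' = ⨆ x ∈ Icc (0 : ℝ) 1, M / |f' x| := by
    simp only [distortion, hM, div_eq_mul_inv,
      Real.iSup_mul_of_nonneg (inv_nonneg.2 (abs_nonneg _))]
  have hM₀ : M ≠ 0 := by
    intro h0
    simp [hdist, h0] at hne
  calc |f' y| / |f' x|
      ≤ M / |f' x| := by gcongr; exact le_biSup_of_biSup_ne_zero hM₀ hy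
    _ ≤ distortion f' := by
      rw [hdist] at hne ⊢
      exact le_biSup_of_biSup_ne_zero (f := fun x => M / |f' x|) hne hx

theorem abs_deriv_le_distortion_mul
    (hf : ∀ x ∈ Icc (0 : ℝ) 1, HasDerivWithinAt f (f' x) (Icc 0 1) x)
    (hends : f 0 ≠ f 1) (hne : distortion f' ≠ 0) {y : ℝ} (hy : y ∈ Icc (0 : ℝ) 1) :
    |f' y| ≤ distortion f' * |f 1 - f 0| := by
  obtain ⟨x, hx, hslope⟩ := exists_hasDerivAt_eq_slope f f' zero_lt_one
    (fun x hx => (hf x hx).continuousWithinAt)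
    (fun x hx => (hf x (Ioo_subset_Icc_self hx)).hasDerivAt (Icc_mem_nhds hx.1 hx.2))
  rw [sub_zero, div_one] at hslope
  have hratio := abs_div_abs_le_distortion hne (Ioo_subset_Icc_self hx) hy
  rwa [hslope, div_le_iff₀ (abs_pos.2 (sub_ne_zero.2 hends.symm))] at hratio

theorem hausdorffMeasure_image_le_of_abs_deriv_le {L : ℝ}
    (hf : ∀ x ∈ Icc (0 : ℝ) 1, HasDerivWithinAt f (f' x) (Icc 0 1) x)
    (hL : ∀ x ∈ Icc (0 : ℝ) 1, |f' x| ≤ L) {A : Set ℝ} (hA : A ⊆ Icc 0 1) {s : ℝ} (hs : 0 ≤ s) :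
    μH[s] (f '' A) ≤ ENNReal.ofReal (L ^ s) * μH[s] A := by
  have hL₀ : 0 ≤ L := (abs_nonneg _).trans (hL 0 (left_mem_Icc.2 zero_le_one))
  have hlip : LipschitzOnWith L.toNNReal f (Icc 0 1) :=
    (convex_Icc 0 1).lipschitzOnWith_of_nnnorm_hasDerivWithin_le hf
      fun x hx => NNReal.le_toNNReal_of_coe_le (hL x hx)
  rw [← ENNReal.ofReal_rpow_of_nonneg hL₀ hs]
  exact (hlip.mono hA).hausdorffMeasure_image_le hs

theorem hausdorffMeasure_image_le_of_mapsTo_Icc {a c K : ℝ}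
    (hf : ∀ x ∈ Icc (0 : ℝ) 1, HasDerivWithinAt f (f' x) (Icc 0 1) x)
    (hinj : InjOn f (Icc 0 1)) (hmaps : MapsTo f (Icc 0 1) (Icc a c))
    (hne : distortion f' ≠ 0) (hK : distortion f' ≤ K) {A : Set ℝ} (hA : A ⊆ Icc 0 1)
    {s : ℝ} (hs : 0 ≤ s) :
    μH[s] (f '' A) ≤ ENNReal.ofReal ((K * (c - a)) ^ s) * μH[s] A := by
  have zero_mem : (0 : ℝ) ∈ Icc (0 : ℝ) 1 := left_mem_Icc.2 zero_le_one
  have one_mem : (1 : ℝ) ∈ Icc (0 : ℝ) 1 := right_mem_Icc.2 zero_le_one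
  have hK₀ : 0 ≤ K := (distortion_nonneg f').trans hK
  have hends : f 0 ≠ f 1 := hinj.ne zero_mem one_mem zero_ne_one
  refine hausdorffMeasure_image_le_of_abs_deriv_le hf (fun y hy => ?_) hA hs
  calc |f' y| ≤ distortion f' * |f 1 - f 0| := abs_deriv_le_distortion_mul hf hends hne hy
    _ ≤ K * (c - a) := by
      gcongr
      exact Real.dist_le_of_mem_Icc (hmaps one_mem) (hmaps zero_mem)

end Distortion

section LimitSet

variable {g : ℕ → ℝ → ℝ} {n : ℕ}

/-- The `l`-th approximation of the limit set `J_n`: the union of the images of `[0, 1]` under all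
compositions of `l` of the maps `g_1, …, g_n`. The recursion on the outermost map makes the
self-similarity of `J_n` visible; the index `j : Fin n` stands for the map `g_{j+1}`. -/
def limitSetApprox (g : ℕ → ℝ → ℝ) (n : ℕ) : ℕ → Set ℝ
  | 0 => Icc 0 1
  | l + 1 => ⋃ j : Fin n, g (j + 1) '' limitSetApprox g n l

theorem limitSetApprox_eq_biUnion_wordComp (g : ℕ → ℝ → ℝ) (n l : ℕ) :
    limitSetApprox g n l =
      ⋃ w ∈ {w : List ℕ | w.length = l ∧ ∀ i ∈ w, 1 ≤ i ∧ i ≤ n}, wordComp g w '' Icc 0 1 := by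
  induction l with
  | zero =>
    have nil_only : {w : List ℕ | w.length = 0 ∧ ∀ i ∈ w, 1 ≤ i ∧ i ≤ n} = {[]} := by
      ext w
      simp +contextual [List.length_eq_zero_iff]
    rw [nil_only, biUnion_singleton, wordComp, image_id, limitSetApprox]
  | succ l ih =>
    ext x
    simp only [limitSetApprox, ih, image_iUnion, mem_iUnion, ← image_comp, exists_prop,
      mem_ofPred_eq]
    constructor
    · rintro ⟨j, w, ⟨hlen, hw⟩, hx⟩
      exact ⟨(j + 1 : ℕ) :: w, ⟨by simp [hlen], by simpa [Nat.succ_le_iff] using hw⟩, hx⟩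
    · rintro ⟨_ | ⟨k, w⟩, ⟨hlen, hkw⟩, hx⟩
      · simp at hlen
      · obtain ⟨⟨hk₁, hkn⟩, hw⟩ := List.forall_mem_cons.1 hkw
        obtain ⟨j, rfl⟩ := Nat.exists_eq_add_of_le' hk₁
        exact ⟨⟨j, hkn⟩, w, ⟨by simpa using hlen, hw⟩, hx⟩

theorem antitone_limitSetApprox (hmaps : ∀ k < n, MapsTo (g (k + 1)) (Icc 0 1) (Icc 0 1)) :
    Antitone (limitSetApprox g n) := by
  refine antitone_nat_of_succ_le fun l => ?_
  induction l with
  | zero => exact iUnion_subset fun j => (hmaps j j.2).image_subset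
  | succ l ih => exact iUnion_mono fun j => image_mono ih

theorem limitSet_eq_iInter_limitSetApprox
    (hmaps : ∀ k < n, MapsTo (g (k + 1)) (Icc 0 1) (Icc 0 1)) :
    limitSet g n = ⋂ l, limitSetApprox g n l := by
  rw [← (antitone_limitSetApprox hmaps).iInter_nat_add 1]
  simp only [limitSet, limitSetApprox_eq_biUnion_wordComp]

theorem limitSet_subset_Icc (hmaps : ∀ k < n, MapsTo (g (k + 1)) (Icc 0 1) (Icc 0 1)) :
    limitSet g n ⊆ Icc 0 1 := by
  rw [limitSet_eq_iInter_limitSetApprox hmaps]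
  exact iInter_subset (limitSetApprox g n) 0

theorem limitSet_eq_iUnion_image (hmaps : ∀ k < n, MapsTo (g (k + 1)) (Icc 0 1) (Icc 0 1))
    (hinj : ∀ k < n, InjOn (g (k + 1)) (Icc 0 1)) :
    limitSet g n = ⋃ j : Fin n, g (j + 1) '' limitSet g n := by
  have hanti := antitone_limitSetApprox hmaps
  have image_iInter (j : Fin n) : g (j + 1) '' ⋂ l, limitSetApprox g n l =
      ⋂ l, g (j + 1) '' limitSetApprox g n l :=
    ((hinj j j.2).mono (iUnion_subset fun l => hanti l.zero_le)).image_iInter_eq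
  rw [limitSet_eq_iInter_limitSetApprox hmaps]
  calc ⋂ l, limitSetApprox g n l
      = ⋂ l, ⋃ j : Fin n, g (j + 1) '' limitSetApprox g n l := (hanti.iInter_nat_add 1).symm
    _ = ⋃ j : Fin n, ⋂ l, g (j + 1) '' limitSetApprox g n l :=
      iInter_iUnion_of_antitone fun j _ _ hle => image_mono (hanti hle)
    _ = ⋃ j : Fin n, g (j + 1) '' ⋂ l, limitSetApprox g n l := by simp only [image_iInter]

theorem Icc_inter_limitSet_subset_biUnion_image {b : ℕ → ℝ} (hb : Antitone b)
    (hunit : ∀ k < n, MapsTo (g (k + 1)) (Icc 0 1) (Icc 0 1))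
    (hinj : ∀ k < n, InjOn (g (k + 1)) (Icc 0 1))
    (hmaps : ∀ k < n, MapsTo (g (k + 1)) (Icc 0 1) (Icc (b (k + 1)) (b k)))
    {p : ℕ} {r : ℝ} (hr : r < b p) :
    Icc 0 r ∩ limitSet g n ⊆ ⋃ k ∈ Finset.Ico p n, g (k + 1) '' limitSet g n := by
  rintro x ⟨⟨-, hxr⟩, hx⟩
  rw [limitSet_eq_iUnion_image hunit hinj] at hx
  obtain ⟨j, y, hy, rfl⟩ := mem_iUnion.1 hx
  have hlt : b (j + 1) < b p :=
    ((hmaps j j.2 (limitSet_subset_Icc hunit hy)).1.trans hxr).trans_lt hr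
  have hpj : p ≤ j := Nat.lt_succ_iff.1 (hb.reflect_lt hlt)
  exact mem_biUnion (Finset.mem_coe.2 (Finset.mem_Ico.2 ⟨hpj, j.2⟩)) ⟨y, hy, rfl⟩

end LimitSet

section Density

variable {b h : ℕ → ℝ} {g g' : ℕ → ℝ → ℝ}

theorem hausdorffMeasure_Icc_inter_limitSet_le (hb : Antitone b) (hb₀ : ∀ k, 0 ≤ b k)
    (hb₁ : b 0 ≤ 1)
    (hderiv : ∀ k, ∀ x ∈ Icc (0 : ℝ) 1, HasDerivWithinAt (g (k + 1)) (g' (k + 1) x) (Icc 0 1) x)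
    (hinj : ∀ k, InjOn (g (k + 1)) (Icc 0 1))
    (hmaps : ∀ k, MapsTo (g (k + 1)) (Icc 0 1) (Icc (b (k + 1)) (b k)))
    {K : ℝ} {p : ℕ}
    (hdist : ∀ k ≥ p, distortion (g' (k + 1)) ≠ 0 ∧ distortion (g' (k + 1)) ≤ K)
    {r : ℝ} (hr : r < b p) (n : ℕ) {s : ℝ} (hs₀ : 0 ≤ s) (hs₁ : s ≤ 1) :
    μH[s] (Icc 0 r ∩ limitSet g n) ≤
      ENNReal.ofReal (K ^ s * ((n : ℝ) ^ (1 - s) * b p ^ s)) * μH[s] (limitSet g n) := by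
  have hK₀ : 0 ≤ K := (distortion_nonneg _).trans (hdist p le_rfl).2
  have hunit (k : ℕ) : MapsTo (g (k + 1)) (Icc 0 1) (Icc 0 1) :=
    (hmaps k).mono_right (Icc_subset_Icc (hb₀ _) ((hb k.zero_le).trans hb₁))
  have hgap (k : ℕ) : 0 ≤ b k - b (k + 1) := sub_nonneg.2 (hb k.le_succ)
  calc μH[s] (Icc 0 r ∩ limitSet g n)
      ≤ ∑ k ∈ Finset.Ico p n, μH[s] (g (k + 1) '' limitSet g n) :=
        (measure_mono (Icc_inter_limitSet_subset_biUnion_image hb (fun k _ => hunit k)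
          (fun k _ => hinj k) (fun k _ => hmaps k) hr)).trans (measure_biUnion_finset_le _ _)
    _ ≤ ∑ k ∈ Finset.Ico p n,
          ENNReal.ofReal ((K * (b k - b (k + 1))) ^ s) * μH[s] (limitSet g n) :=
        Finset.sum_le_sum fun k hk =>
          have ⟨hne, hle⟩ := hdist k (Finset.mem_Ico.1 hk).1
          hausdorffMeasure_image_le_of_mapsTo_Icc (hderiv k) (hinj k) (hmaps k) hne hle
            (limitSet_subset_Icc fun k _ => hunit k) hs₀
    _ = ENNReal.ofReal (K ^ s * ∑ k ∈ Finset.Ico p n, (b k - b (k + 1)) ^ s) *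
          μH[s] (limitSet g n) := by
        rw [← Finset.sum_mul, ← ENNReal.ofReal_sum_of_nonneg fun k _ =>
          Real.rpow_nonneg (mul_nonneg hK₀ (hgap k)) s, Finset.mul_sum]
        simp only [Real.mul_rpow hK₀ (hgap _)]
    _ ≤ ENNReal.ofReal (K ^ s * ((n : ℝ) ^ (1 - s) * b p ^ s)) * μH[s] (limitSet g n) := by
        gcongr
        exact sum_Ico_rpow_sub_succ_le hb hb₀ p n hs₀ hs₁

theorem rpow_mul_mul_rpow_le_pow_three_mul_rpow {K r s x y : ℝ} (hK : 1 ≤ K) (hr : 0 ≤ r)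
    (hs₀ : 0 ≤ s) (hs₁ : s ≤ 1) (hx : x ≤ K) (hy₀ : 0 ≤ y) (hy : y ≤ K * r) :
    K ^ s * (x * y ^ s) ≤ K ^ 3 * r ^ s := by
  have hKs : K ^ s ≤ K := Real.rpow_le_self_of_one_le hK hs₁
  calc K ^ s * (x * y ^ s) ≤ K ^ s * (K * (K * r) ^ s) := by gcongr
    _ = K ^ s * (K * (K ^ s * r ^ s)) := by rw [Real.mul_rpow (by positivity) hr]
    _ ≤ K * (K * (K * r ^ s)) := by gcongr
    _ = K ^ 3 * r ^ s := by ring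

theorem le_one_of_dimH_eq_ofReal_s12 {A : Set ℝ} {s : ℝ} (hs : dimH A = ENNReal.ofReal s) : s ≤ 1 := by
  rw [← ENNReal.ofReal_le_one, ← hs, ← Real.dimH_univ]
  exact dimH_mono (subset_univ A)

theorem nonlinear_density_zero_small_r_general (hb : StrictAnti b) (hb₁ : b 0 ≤ 1)
    (hb_lim : Tendsto b atTop (𝓝 0))
    (hderiv : ∀ k, ∀ x ∈ Icc (0 : ℝ) 1, HasDerivWithinAt (g (k + 1)) (g' (k + 1) x) (Icc 0 1) x)
    (hinj : ∀ k, InjOn (g (k + 1)) (Icc 0 1))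
    (hmaps : ∀ k, MapsTo (g (k + 1)) (Icc 0 1) (Icc (b (k + 1)) (b k)))
    (hdim : ∀ n, 1 ≤ n → dimH (limitSet g n) = ENNReal.ofReal (h n))
    (hN1 : Tendsto (fun n : ℕ => (1 - h n) * Real.log n) atTop (𝓝 0))
    (hN2 : Tendsto (fun n : ℕ => ⨆ k ∈ Ici n, b k / b (k + 1)) atTop (𝓝 1))
    (hN4 : Tendsto (fun n : ℕ => distortion (g' n)) atTop (𝓝 1)) :
    ∀ ε > (0 : ℝ), ∃ n₀ : ℕ, ∃ r₀ > (0 : ℝ), ∀ n > n₀, ∀ r : ℝ, 0 < r → r < r₀ →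
      μH[h n] (Icc 0 r ∩ limitSet g n) ≤
        ENNReal.ofReal (1 + ε) * ENNReal.ofReal (r ^ h n) * μH[h n] (limitSet g n) := by
  intro ε hε
  obtain ⟨K, hK, hKε⟩ : ∃ K : ℝ, 1 < K ∧ K ^ 3 = 1 + ε :=
    ⟨(1 + ε) ^ (3⁻¹ : ℝ), Real.one_lt_rpow (by linarith) (by norm_num),
      Real.rpow_inv_natCast_pow (by linarith) three_ne_zero⟩
  have hb₀ (k : ℕ) : 0 < b k :=
    (hb.antitone.le_of_tendsto hb_lim (k + 1)).trans_lt (hb k.lt_succ_self)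
  have hdist := (tendsto_add_atTop_iff_nat 1).2 hN4
  obtain ⟨N, hN⟩ := eventually_atTop.1 <| (eventually_le_mul_succ hb₀ hN2 hK).and <|
    (hdist.eventually_ne one_ne_zero).and (hdist.eventually_le_const hK)
  obtain ⟨n₀, hn₀⟩ := eventually_atTop.1 <|
    ((tendsto_one_of_tendsto_one_sub_mul_log hN1).eventually_const_le zero_lt_one).and <|
      (tendsto_natCast_rpow_one_sub hN1).eventually_le_const hK
  refine ⟨n₀, b N, hb₀ N, fun n hn r hr hrN => ?_⟩
  obtain ⟨hs₀, hnpow⟩ := hn₀ n hn.le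
  have hs₁ : h n ≤ 1 := le_one_of_dimH_eq_ofReal_s12 (hdim n (Nat.one_le_of_lt hn))
  obtain ⟨p, hNp, hpr, hrp⟩ := exists_ge_succ_le_and_lt hb_lim hr hrN
  have hbp : b p ≤ K * r := (hN p hNp).1.trans (by gcongr)
  refine (hausdorffMeasure_Icc_inter_limitSet_le hb.antitone (fun k => (hb₀ k).le) hb₁ hderiv hinj
    hmaps (fun k hk => (hN k (hNp.trans hk)).2) hrp n hs₀ hs₁).trans ?_
  rw [← ENNReal.ofReal_mul (by linarith), ← hKε]
  gcongr ENNReal.ofReal ?_ * _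
  exact rpow_mul_mul_rpow_le_pow_three_mul_rpow hK.le hr.le hs₀ hs₁ hnpow (hb₀ p).le hbp

end Density

/-- In the nonlinear setting, for every `ε > 0` there are `n₀` and `r₀ > 0` such that
    `m_n([0,r])/r^{h_n} ≤ 1 + ε` for all `n > n₀` and `r ∈ (0, r₀)`. -/
theorem nonlinear_density_zero_small_r (S : NonlinearIFS) :
    ∀ ε > (0 : ℝ), ∃ n₀ : ℕ, ∃ r₀ > (0 : ℝ), ∀ n > n₀, ∀ r : ℝ, 0 < r → r < r₀ →
      normMeas S n (Set.Icc 0 r) / ENNReal.ofReal (r ^ S.h n) ≤ ENNReal.ofReal (1 + ε) := by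
  intro ε hε
  obtain ⟨n₀, r₀, hr₀, hbound⟩ := nonlinear_density_zero_small_r_general
    S.b_anti S.b_zero.le S.b_lim
    (fun k x hx => (S.deriv1 (k + 1) k.succ_pos x hx).hasDerivWithinAt)
    (fun k => (S.g_anti (k + 1) k.succ_pos).injOn)
    (fun k => mapsTo_iff_image_subset.2 (S.g_image (k + 1) k.succ_pos).subset)
    S.h_dim S.N1 S.N2 S.N4 ε hε
  exact ⟨n₀, r₀, hr₀, fun n hn r hr hrr₀ =>
    ENNReal.div_le_of_le_mul (ENNReal.div_le_of_le_mul (hbound n hn r hr hrr₀))⟩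
end
end
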